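/- arXiv:1507.00681 — 4 statements merged into one kernel-verified Lean document; each statement's English description precedes it below -/
import Mathlib

section
/- Let m, n ≥ 2 be integers and let (x, y, θ) be a solution of the self-shrinker profile system on an interval (a, b) with lim_{t→b} (x(t), y(t)) = (0, 0). Then the curve lies on the cone line: √(m−1)·y(t) = √(n−1)·x(t) for all t ∈ (a, b). That is, the only solution of the profile equation passing through the origin is the line y = √((n−1)/(m−1))·x. -/
open Set Filter Topology

/-- `(x, y, θ)` solves the self-shrinker profile system
`x' = cos θ`, `y' = sin θ`,
`θ' = (x/2 − (m−1)/x)·sin θ + ((n−1)/y − y/2)·cos θ`, with `x, y > 0`, on the set `S`. -/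
def SysSol (m n : ℕ) (x y θ : ℝ → ℝ) (S : Set ℝ) : Prop :=
  ∀ t ∈ S, 0 < x t ∧ 0 < y t ∧
    HasDerivAt x (Real.cos (θ t)) t ∧ HasDerivAt y (Real.sin (θ t)) t ∧
    HasDerivAt θ ((x t / 2 - ((m : ℝ) - 1) / x t) * Real.sin (θ t)
      + (((n : ℝ) - 1) / y t - y t / 2) * Real.cos (θ t)) t

lemma cl_nonpos {f f' : ℝ → ℝ} {s b : ℝ}
    (hf : ∀ t ∈ Ioo s b, HasDerivAt f (f' t) t) (h0 : ∀ t ∈ Ioo s b, 0 ≤ f' t)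
    (hl : Tendsto f (𝓝[<] b) (𝓝 0)) : ∀ t ∈ Ioo s b, f t ≤ 0 := by
  have hmono : MonotoneOn f (Ioo s b) := by
    apply monotoneOn_of_deriv_nonneg (convex_Ioo s b)
    · exact fun t ht => (hf t ht).continuousAt.continuousWithinAt
    · intro t ht
      rw [interior_Ioo] at ht
      exact (hf t ht).differentiableAt.differentiableWithinAt
    · intro t ht
      rw [interior_Ioo] at ht
      rw [(hf t ht).deriv]
      exact h0 t ht
  intro t ht
  refine ge_of_tendsto hl ?_
  filter_upwards [Ioo_mem_nhdsLT ht.2] with u hu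
  exact hmono ht ⟨ht.1.trans hu.1, hu.2⟩ hu.1.le

lemma cl_neg {f f' : ℝ → ℝ} {s b : ℝ}
    (hf : ∀ t ∈ Ioo s b, HasDerivAt f (f' t) t) (h0 : ∀ t ∈ Ioo s b, 0 < f' t)
    (hl : Tendsto f (𝓝[<] b) (𝓝 0)) : ∀ t ∈ Ioo s b, f t < 0 := by
  have hmono : StrictMonoOn f (Ioo s b) := by
    apply strictMonoOn_of_deriv_pos (convex_Ioo s b)
    · exact fun t ht => (hf t ht).continuousAt.continuousWithinAt
    · intro t ht
      rw [interior_Ioo] at ht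
      rw [(hf t ht).deriv]
      exact h0 t ht
  intro t ht
  have hu : (t + b) / 2 ∈ Ioo s b := ⟨by linarith [ht.1, ht.2], by linarith [ht.2]⟩
  exact lt_of_lt_of_le (hmono ht hu (by linarith [ht.2]))
    (cl_nonpos hf (fun t ht => (h0 t ht).le) hl _ hu)

/-- the part of the Lyapunov function in the slope of the tangent -/
lemma cl_A (p0 p : ℝ) :
    0 ≤ (Real.log (1 + p^2) / 2 - p0 * Real.arctan p)
      - (Real.log (1 + p0^2) / 2 - p0 * Real.arctan p0) ∧
    (Real.log (1 + p^2) / 2 - p0 * Real.arctan p)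
      - (Real.log (1 + p0^2) / 2 - p0 * Real.arctan p0) ≤ (p - p0)^2 / 2 := by
  set A : ℝ → ℝ := fun p => Real.log (1 + p^2) / 2 - p0 * Real.arctan p with hA
  have hd : ∀ p, HasDerivAt A ((p - p0) / (1 + p^2)) p := by
    intro p
    have h1 : HasDerivAt (fun p : ℝ => 1 + p^2) (2 * p) p := by
      simpa using ((hasDerivAt_id p).pow 2).const_add 1
    have h2 := (h1.log (by positivity)).div_const 2
    have h3 := (Real.hasDerivAt_arctan p).const_mul p0
    refine (h2.sub h3).congr_deriv ?_
    field_simp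
  have hd2 : ∀ p, HasDerivAt (fun p => (p - p0)^2/2 - A p)
      ((p - p0) - (p - p0) / (1 + p^2)) p := by
    intro p
    have h1 : HasDerivAt (fun p : ℝ => (p - p0)^2/2) (p - p0) p := by
      have := (((hasDerivAt_id p).sub_const p0).pow 2).div_const 2
      refine this.congr_deriv ?_
      simp
    exact h1.sub (hd p)
  have e : ∀ p, (p - p0) - (p - p0) / (1 + p^2) = (p - p0) * (p^2 / (1 + p^2)) := by
    intro p
    field_simp
    ring
  have key : ∀ (f f' : ℝ → ℝ), (∀ p, HasDerivAt f (f' p) p) →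
      (∀ p, p0 ≤ p → 0 ≤ f' p) → (∀ p, p ≤ p0 → f' p ≤ 0) → f p0 ≤ f p := by
    intro f f' hf h1 h2
    rcases le_total p0 p with h | h
    · have hm : MonotoneOn f (Ici p0) := by
        apply monotoneOn_of_deriv_nonneg (convex_Ici p0)
        · exact fun t ht => (hf t).continuousAt.continuousWithinAt
        · exact fun t ht => (hf t).differentiableAt.differentiableWithinAt
        · intro t ht
          rw [interior_Ici] at ht
          rw [(hf t).deriv]
          exact h1 t (le_of_lt ht)
      exact hm self_mem_Ici h h
    · have hm : AntitoneOn f (Iic p0) := by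
        apply antitoneOn_of_deriv_nonpos (convex_Iic p0)
        · exact fun t ht => (hf t).continuousAt.continuousWithinAt
        · exact fun t ht => (hf t).differentiableAt.differentiableWithinAt
        · intro t ht
          rw [interior_Iic] at ht
          rw [(hf t).deriv]
          exact h2 t (le_of_lt ht)
      exact hm h self_mem_Iic h
  constructor
  · have := key A _ hd (fun p hp => div_nonneg (by linarith) (by positivity))
      (fun p hp => div_nonpos_of_nonpos_of_nonneg (by linarith) (by positivity))
    simp only [hA] at this
    linarith
  · have := key _ _ hd2
      (fun p hp => by rw [e]; exact mul_nonneg (by linarith) (by positivity))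
      (fun p hp => by rw [e]; exact mul_nonpos_of_nonpos_of_nonneg (by linarith) (by positivity))
    simp only [hA] at this
    norm_num at this
    linarith

lemma cl_B (p0 q : ℝ) (hp0 : 0 < p0) (hq : 0 < q) :
    0 ≤ (q - p0 * Real.log q) - (p0 - p0 * Real.log p0) ∧
    ((q - p0 * Real.log q) - (p0 - p0 * Real.log p0) ≤ 0 → q = p0) ∧
    (q - p0 * Real.log q) - (p0 - p0 * Real.log p0) ≤ (q - p0)^2 / q := by
  have e : (q - p0 * Real.log q) - (p0 - p0 * Real.log p0)
      = p0 * (q / p0 - 1 - Real.log (q / p0)) := by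
    rw [Real.log_div hq.ne' hp0.ne']
    field_simp
    ring
  have hz : 0 < q / p0 := by positivity
  rw [e]
  refine ⟨mul_nonneg hp0.le (by linarith [Real.log_le_sub_one_of_pos hz]), ?_, ?_⟩
  · intro h
    by_contra hne
    have h1 : q / p0 ≠ 1 := by
      intro h
      rw [div_eq_one_iff_eq hp0.ne'] at h
      exact hne h
    have := Real.log_lt_sub_one_of_pos hz h1
    have : 0 < p0 * (q / p0 - 1 - Real.log (q / p0)) := mul_pos hp0 (by linarith)
    linarith
  · have h1 := Real.one_sub_inv_le_log_of_pos hz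
    calc p0 * (q / p0 - 1 - Real.log (q / p0))
        ≤ p0 * (q / p0 - 1 - (1 - (q / p0)⁻¹)) := by gcongr
      _ = (q - p0)^2 / q := by
        field_simp

/-- algebraic lower bound for the derivative of the Lyapunov function -/
lemma cl_D (α p0 p q x : ℝ) (hα : 1 ≤ α) (hq : 0 < q)
    (hx : x^2 ≤ 1/2) (hxq : x^2 * q ≤ α * p0) :
    (α * (p - p0)^2 + α * p0 * ((q - p0)^2 / q)) / 2 ≤
    (p - p0) * (α * p - α * p0^2 / q + x^2 * (q - p) / 2)
      + α * p0 * (1 - p0 / q) * (q - p) := by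
  have e : (p - p0) * (α * p - α * p0^2 / q + x^2 * (q - p) / 2)
      + α * p0 * (1 - p0 / q) * (q - p) = α * (p - p0)^2 + α * p0 * ((q - p0)^2 / q)
      + (p - p0) * (x^2 / 2) * ((q - p0) - (p - p0)) := by
    field_simp
    ring
  rw [e]
  have h1 : x^2 * (q - p0)^2 ≤ α * p0 * ((q - p0)^2 / q) := by
    rw [← mul_div_assoc, le_div_iff₀ hq]
    nlinarith [mul_le_mul_of_nonneg_right hxq (sq_nonneg (q - p0))]
  have h2 : x^2 * (p - p0)^2 ≤ 1/2 * (p - p0)^2 := by gcongr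
  have h3 : 1 * (p - p0)^2 ≤ α * (p - p0)^2 := by gcongr
  have h4 : 0 ≤ x^2 * ((p - p0) + (q - p0))^2 := by positivity
  have h5 : 0 ≤ x^2 * (p - p0)^2 := by positivity
  have h6 : 0 ≤ x^2 * (q - p0)^2 := by positivity
  nlinarith

lemma cl_back (α γ : ℝ) (hα : 1 ≤ α) (hγ : 1 ≤ γ) (s u : ℝ) (hsu : s ≤ u) (x y θ : ℝ → ℝ)
    (hsol : ∀ t ∈ Icc s u, 0 < x t ∧ 0 < y t ∧
      HasDerivAt x (Real.cos (θ t)) t ∧ HasDerivAt y (Real.sin (θ t)) t ∧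
      HasDerivAt θ ((x t / 2 - α / x t) * Real.sin (θ t)
      + (γ / y t - y t / 2) * Real.cos (θ t)) t)
    (h1 : √α * y u = √γ * x u) (h2 : √α * Real.sin (θ u) = √γ * Real.cos (θ u)) :
    √α * y s = √γ * x s := by
  have ha : 0 < √α := by positivity
  have hc : 0 < √γ := by positivity
  have ha2 : √α * √α = α := Real.mul_self_sqrt (by linarith)
  have hc2 : √γ * √γ = γ := Real.mul_self_sqrt (by linarith)
  set a := √α
  set c := √γ
  set A : ℝ → ℝ := fun t => a * y t - c * x t with hA
  set B : ℝ → ℝ := fun t => a * Real.sin (θ t) - c * Real.cos (θ t) with hB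
  set T : ℝ → ℝ := fun t => (x t / 2 - α / x t) * Real.sin (θ t)
      + (γ / y t - y t / 2) * Real.cos (θ t) with hT
  set W : ℝ → ℝ := fun t => a * Real.cos (θ t) + c * Real.sin (θ t) with hW
  -- T = P A + Q B
  set P : ℝ → ℝ := fun t => - Real.cos (θ t) / (2 * a) - a * Real.sin (θ t) / (x t * y t) with hP
  set Q : ℝ → ℝ := fun t => x t / (2 * a) - c / y t with hQ
  have hTe : ∀ t ∈ Icc s u, T t = P t * A t + Q t * B t := by
    intro t ht
    obtain ⟨hx, hy, -⟩ := hsol t ht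
    simp only [hT, hP, hQ, hA, hB]
    rw [← ha2, ← hc2]
    field_simp
    ring
  have hcx : ContinuousOn x (Icc s u) := fun t ht => (hsol t ht).2.2.1.continuousAt.continuousWithinAt
  have hcy : ContinuousOn y (Icc s u) := fun t ht => (hsol t ht).2.2.2.1.continuousAt.continuousWithinAt
  have hct : ContinuousOn θ (Icc s u) := fun t ht => (hsol t ht).2.2.2.2.continuousAt.continuousWithinAt
  have hxn : ∀ t ∈ Icc s u, x t ≠ 0 := fun t ht => (hsol t ht).1.ne'
  have hyn : ∀ t ∈ Icc s u, y t ≠ 0 := fun t ht => (hsol t ht).2.1.ne'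
  have hcos : ContinuousOn (fun t => Real.cos (θ t)) (Icc s u) := Real.continuous_cos.comp_continuousOn hct
  have hsin : ContinuousOn (fun t => Real.sin (θ t)) (Icc s u) := Real.continuous_sin.comp_continuousOn hct
  have hWc : ContinuousOn W (Icc s u) := by fun_prop
  have hPc : ContinuousOn P (Icc s u) := by
    apply ContinuousOn.sub
    · exact hcos.neg.div_const _
    · exact (hsin.const_smul a).div (hcx.mul hcy) (fun t ht => mul_ne_zero (hxn t ht) (hyn t ht))
  have hQc : ContinuousOn Q (Icc s u) := by
    apply ContinuousOn.sub
    · exact hcx.div_const _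
    · exact continuousOn_const.div hcy hyn
  obtain ⟨K, hK⟩ := isCompact_Icc.exists_bound_of_continuousOn
    (f := fun t => (|1 + P t * W t| + 2 * |Q t * W t|)) (s := Icc s u) (by fun_prop)
  have hdE : ∀ t ∈ Icc s u, HasDerivAt (fun t => (A t ^2 + B t^2) * Real.exp (K * t))
      ((2 * A t * B t + 2 * B t * (T t * W t)) * Real.exp (K * t)
        + (A t ^2 + B t^2) * (Real.exp (K * t) * K)) t := by
    intro t ht
    obtain ⟨hx, hy, dx, dy, dt⟩ := hsol t ht
    have dA : HasDerivAt A (B t) t := (dy.const_mul a).sub (dx.const_mul c)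
    have dB : HasDerivAt B (T t * W t) t := by
      refine ((dt.sin.const_mul a).sub (dt.cos.const_mul c)).congr_deriv ?_
      simp only [hT, hW]
      ring
    have dK : HasDerivAt (fun t => Real.exp (K * t)) (Real.exp (K * t) * K) t := by
      simpa using ((hasDerivAt_id t).const_mul K).exp
    refine (((dA.pow 2).add (dB.pow 2)).mul dK).congr_deriv ?_
    simp
  have hmono : MonotoneOn (fun t => (A t ^2 + B t^2) * Real.exp (K * t)) (Icc s u) := by
    apply monotoneOn_of_deriv_nonneg (convex_Icc s u)
    · exact fun t ht => (hdE t ht).continuousAt.continuousWithinAt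
    · intro t ht
      exact (hdE t (interior_subset ht)).differentiableAt.differentiableWithinAt
    · intro t ht
      have ht := interior_subset ht
      rw [(hdE t ht).deriv, hTe t ht]
      have hk := hK t ht
      rw [Real.norm_eq_abs] at hk
      have hk := (le_abs_self _).trans hk
      have : 0 ≤ (2 * A t * B t + 2 * B t * ((P t * A t + Q t * B t) * W t))
        + (A t ^2 + B t^2) * K := by
        generalize A t = A at *
        generalize B t = B at *
        have e : (2 * A * B + 2 * B * ((P t * A + Q t * B) * W t))
          = (1 + P t * W t) * (2 * A * B) + 2 * (Q t * W t) * B^2 := by ring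
        rw [e]
        have i1 : -(|1 + P t * W t| * (A^2 + B^2)) ≤ (1 + P t * W t) * (2 * A * B) := by
          have : |(1 + P t * W t) * (2 * A * B)| ≤ |1 + P t * W t| * (A^2 + B^2) := by
            rw [abs_mul]
            gcongr
            rw [abs_le]
            constructor <;> nlinarith [sq_nonneg (A + B), sq_nonneg (A - B)]
          linarith [neg_abs_le ((1 + P t * W t) * (2 * A * B))]
        have i2 : -(|Q t * W t| * B^2) ≤ (Q t * W t) * B^2 := by
          nlinarith [neg_abs_le (Q t * W t), sq_nonneg B]
        have i3 : 0 ≤ |Q t * W t| * A^2 := by positivity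
        have i4 := mul_le_mul_of_nonneg_left hk (by positivity : 0 ≤ A^2 + B^2)
        nlinarith
      have := mul_nonneg this (Real.exp_pos (K * t)).le
      linarith
  have hfin := hmono (left_mem_Icc.2 hsu) (right_mem_Icc.2 hsu) hsu
  have hA0 : A u = 0 := by simp only [hA]; linarith
  have hB0 : B u = 0 := by simp only [hB]; linarith
  simp only [hA0, hB0] at hfin
  have : A s ^2 + B s^2 ≤ 0 := by
    by_contra h
    push Not at h
    have := mul_pos h (Real.exp_pos (K * s))
    norm_num at hfin
    linarith
  have : A s = 0 := by nlinarith [sq_nonneg (A s), sq_nonneg (B s)]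
  simp only [hA] at this
  linarith

/-- first variation computations -/
lemma cl_FV (k l : ℕ) (x y θ : ℝ → ℝ) (t : ℝ) (hx : 0 < x t) (hy : 0 < y t)
    (dx : HasDerivAt x (Real.cos (θ t)) t) (dy : HasDerivAt y (Real.sin (θ t)) t)
    (dt : HasDerivAt θ ((x t / 2 - ((k:ℝ)+1) / x t) * Real.sin (θ t)
      + (((l:ℝ)+1) / y t - y t / 2) * Real.cos (θ t)) t) :
    HasDerivAt (fun t => x t^(k+1) * y t^(l+1) * Real.exp (-(x t^2 + y t^2)/4)
      * (x t * Real.cos (θ t)))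
      (x t^(k+1) * y t^(l+1) * Real.exp (-(x t^2 + y t^2)/4)
      * (((k:ℝ)+1) + Real.cos (θ t)^2 - x t^2/2)) t ∧
    HasDerivAt (fun t => x t^(k+1) * y t^(l+1) * Real.exp (-(x t^2 + y t^2)/4)
      * (y t * Real.sin (θ t)))
      (x t^(k+1) * y t^(l+1) * Real.exp (-(x t^2 + y t^2)/4)
      * (((l:ℝ)+1) + Real.sin (θ t)^2 - y t^2/2)) t := by
  have dF := ((dx.pow (k+1)).mul (dy.pow (l+1))).mul
    ((((dx.pow 2).add (dy.pow 2)).neg.div_const 4).exp)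
  have hsc : Real.sin (θ t)^2 = 1 - Real.cos (θ t)^2 := by
    linarith [Real.sin_sq_add_cos_sq (θ t)]
  constructor
  · refine (dF.mul (dx.mul dt.cos)).congr_deriv ?_
    simp
    field_simp
    ring_nf
    rw [hsc]
    ring
  · refine (dF.mul (dy.mul dt.sin)).congr_deriv ?_
    simp
    field_simp
    ring_nf
    have hcs : Real.cos (θ t)^2 = 1 - Real.sin (θ t)^2 := by
      linarith [Real.sin_sq_add_cos_sq (θ t)]
    rw [hcs]
    ring

set_option maxHeartbeats 1000000 in
lemma cl_core (k l : ℕ) (s b : ℝ) (hsb : s < b) (x y θ : ℝ → ℝ)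
    (hsol : ∀ t ∈ Ioo s b, 0 < x t ∧ 0 < y t ∧
      HasDerivAt x (Real.cos (θ t)) t ∧ HasDerivAt y (Real.sin (θ t)) t ∧
      HasDerivAt θ ((x t / 2 - ((k:ℝ)+1) / x t) * Real.sin (θ t)
      + (((l:ℝ)+1) / y t - y t / 2) * Real.cos (θ t)) t)
    (hx0 : Tendsto x (𝓝[<] b) (𝓝 0)) (hy0 : Tendsto y (𝓝[<] b) (𝓝 0))
    (hxs : ∀ t ∈ Ioo s b, x t^2 ≤ 1/2) (hys : ∀ t ∈ Ioo s b, y t^2 ≤ 1/2)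
    (hxy : ∀ t ∈ Ioo s b, x t * y t ≤ √((k:ℝ)+1) * √((l:ℝ)+1)) :
    ∀ t ∈ Ioo s b, √((k:ℝ)+1) * y t = √((l:ℝ)+1) * x t := by
  set α : ℝ := (k:ℝ)+1 with hα
  set γ : ℝ := (l:ℝ)+1 with hγ
  have hα1 : 1 ≤ α := by rw [hα]; linarith [(Nat.cast_nonneg k : (0:ℝ) ≤ k)]
  have hγ1 : 1 ≤ γ := by rw [hγ]; linarith [(Nat.cast_nonneg l : (0:ℝ) ≤ l)]
  set F : ℝ → ℝ := fun t => x t^(k+1) * y t^(l+1) * Real.exp (-(x t^2 + y t^2)/4) with hF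
  have hFpos : ∀ t ∈ Ioo s b, 0 < F t := by
    intro t ht
    obtain ⟨hx, hy, -⟩ := hsol t ht
    simp only [hF]
    positivity
  set G : ℝ → ℝ := fun t => F t * (x t * Real.cos (θ t)) with hG
  set H : ℝ → ℝ := fun t => F t * (y t * Real.sin (θ t)) with hH
  have dG : ∀ t ∈ Ioo s b, HasDerivAt G (F t * (α + Real.cos (θ t)^2 - x t^2/2)) t := by
    intro t ht
    obtain ⟨hx, hy, dx, dy, dt⟩ := hsol t ht
    exact (cl_FV k l x y θ t hx hy dx dy dt).1
  have dH : ∀ t ∈ Ioo s b, HasDerivAt H (F t * (γ + Real.sin (θ t)^2 - y t^2/2)) t := by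
    intro t ht
    obtain ⟨hx, hy, dx, dy, dt⟩ := hsol t ht
    exact (cl_FV k l x y θ t hx hy dx dy dt).2
  have hFl : Tendsto F (𝓝[<] b) (𝓝 0) := by
    have := ((hx0.pow (k+1)).mul (hy0.pow (l+1))).mul
      ((Real.continuous_exp.tendsto _).comp (((hx0.pow 2).add (hy0.pow 2)).neg.div_const 4))
    refine (this.congr (fun t => rfl)).trans (le_of_eq ?_)
    simp
  have hGl : Tendsto G (𝓝[<] b) (𝓝 0) := by
    have h1 := hFl.mul hx0
    rw [mul_zero] at h1
    refine squeeze_zero_norm (fun t => ?_) (tendsto_zero_iff_norm_tendsto_zero.1 h1)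
    simp only [hG, Real.norm_eq_abs, ← mul_assoc, abs_mul]
    exact mul_le_of_le_one_right (by positivity) (Real.abs_cos_le_one _)
  have hHl : Tendsto H (𝓝[<] b) (𝓝 0) := by
    have h1 := hFl.mul hy0
    rw [mul_zero] at h1
    refine squeeze_zero_norm (fun t => ?_) (tendsto_zero_iff_norm_tendsto_zero.1 h1)
    simp only [hH, Real.norm_eq_abs, ← mul_assoc, abs_mul]
    exact mul_le_of_le_one_right (by positivity) (Real.abs_sin_le_one _)
  have hcos : ∀ t ∈ Ioo s b, Real.cos (θ t) < 0 := by
    intro t ht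
    have h := cl_neg dG (fun t ht => mul_pos (hFpos t ht)
      (by nlinarith [hxs t ht, sq_nonneg (Real.cos (θ t))])) hGl t ht
    have h2 : F t * (x t * Real.cos (θ t)) < 0 := h
    have h3 := neg_of_mul_neg_right h2 (hFpos t ht).le
    exact neg_of_mul_neg_right h3 (hsol t ht).1.le
  have hsin : ∀ t ∈ Ioo s b, Real.sin (θ t) < 0 := by
    intro t ht
    have h := cl_neg dH (fun t ht => mul_pos (hFpos t ht)
      (by nlinarith [hys t ht, sq_nonneg (Real.sin (θ t))])) hHl t ht
    have h2 : F t * (y t * Real.sin (θ t)) < 0 := h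
    have h3 := neg_of_mul_neg_right h2 (hFpos t ht).le
    exact neg_of_mul_neg_right h3 (hsol t ht).2.1.le
  obtain ⟨lam, hlam, hlam2⟩ : ∃ lam : ℝ, 0 < lam ∧ lam * (α + 1) = 1/2 :=
    ⟨1/2/(α+1), by positivity, by field_simp⟩
  obtain ⟨mu, hmu, hmu2⟩ : ∃ mu : ℝ, 0 < mu ∧ mu * (γ + 1) = 1/2 :=
    ⟨1/2/(γ+1), by positivity, by field_simp⟩
  have hc1 : ∀ t, Real.cos (θ t)^2 ≤ 1 := fun t => Real.cos_sq_le_one _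
  have hs1 : ∀ t, Real.sin (θ t)^2 ≤ 1 := fun t => Real.sin_sq_le_one _
  have r1 : ∀ t ∈ Ioo s b, y t * Real.sin (θ t) ≤ lam * (x t * Real.cos (θ t)) := by
    intro t ht
    have h := cl_nonpos (f := fun t => H t - lam * G t)
      (fun t ht => (dH t ht).sub ((dG t ht).const_mul lam))
      (fun t ht => by
        have : 0 ≤ F t * ((γ + Real.sin (θ t)^2 - y t^2/2)
            - lam * (α + Real.cos (θ t)^2 - x t^2/2)) := by
          refine mul_nonneg (hFpos t ht).le ?_
          nlinarith [hc1 t, hys t ht, sq_nonneg (Real.sin (θ t)), sq_nonneg (x t),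
            mul_le_mul_of_nonneg_left (hc1 t) hlam.le, mul_nonneg hlam.le (sq_nonneg (x t))]
        linarith) (by simpa using hHl.sub (hGl.const_mul lam)) t ht
    simp only [hG, hH] at h
    have h2 : F t * (y t * Real.sin (θ t) - lam * (x t * Real.cos (θ t))) ≤ 0 := by linarith
    have := nonpos_of_mul_nonpos_right h2 (hFpos t ht)
    linarith
  have r2 : ∀ t ∈ Ioo s b, x t * Real.cos (θ t) ≤ mu * (y t * Real.sin (θ t)) := by
    intro t ht
    have h := cl_nonpos (f := fun t => G t - mu * H t)
      (fun t ht => (dG t ht).sub ((dH t ht).const_mul mu))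
      (fun t ht => by
        have : 0 ≤ F t * ((α + Real.cos (θ t)^2 - x t^2/2)
            - mu * (γ + Real.sin (θ t)^2 - y t^2/2)) := by
          refine mul_nonneg (hFpos t ht).le ?_
          nlinarith [hs1 t, hxs t ht, sq_nonneg (Real.cos (θ t)), sq_nonneg (y t),
            mul_le_mul_of_nonneg_left (hs1 t) hmu.le, mul_nonneg hmu.le (sq_nonneg (y t))]
        linarith) (by simpa using hGl.sub (hHl.const_mul mu)) t ht
    simp only [hG, hH] at h
    have h2 : F t * (x t * Real.cos (θ t) - mu * (y t * Real.sin (θ t))) ≤ 0 := by linarith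
    have := nonpos_of_mul_nonpos_right h2 (hFpos t ht)
    linarith
  have q1 : ∀ t ∈ Ioo s b, lam * x t^2 ≤ y t^2 := by
    intro t ht
    have h := cl_nonpos (f := fun t => lam * x t^2 - y t^2)
      (fun t ht => (((hsol t ht).2.2.1.pow 2).const_mul lam).sub ((hsol t ht).2.2.2.1.pow 2))
      (fun t ht => by
        have := r1 t ht
        simp
        linarith) (by simpa using ((hx0.pow 2).const_mul lam).sub (hy0.pow 2)) t ht
    linarith
  have q2 : ∀ t ∈ Ioo s b, mu * y t^2 ≤ x t^2 := by
    intro t ht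
    have h := cl_nonpos (f := fun t => mu * y t^2 - x t^2)
      (fun t ht => (((hsol t ht).2.2.2.1.pow 2).const_mul mu).sub ((hsol t ht).2.2.1.pow 2))
      (fun t ht => by
        have := r2 t ht
        simp
        linarith) (by simpa using ((hy0.pow 2).const_mul mu).sub (hx0.pow 2)) t ht
    linarith
  have ha : 0 < √α := by positivity
  have hc : 0 < √γ := by positivity
  have ha2 : √α * √α = α := Real.mul_self_sqrt (by linarith)
  have hc2 : √γ * √γ = γ := Real.mul_self_sqrt (by linarith)
  obtain ⟨p0, hp0, hp0a⟩ : ∃ p0 : ℝ, 0 < p0 ∧ √α * p0 = √γ :=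
    ⟨√γ / √α, by positivity, by field_simp⟩
  have hγe : γ = α * p0^2 := by
    rw [← hc2, ← ha2, ← hp0a]; ring
  set p : ℝ → ℝ := fun t => Real.sin (θ t) / Real.cos (θ t) with hp
  set q : ℝ → ℝ := fun t => y t / x t with hq
  have hqpos : ∀ t ∈ Ioo s b, 0 < q t := fun t ht => div_pos (hsol t ht).2.1 (hsol t ht).1
  have hppos : ∀ t ∈ Ioo s b, 0 < p t := fun t ht => div_pos_of_neg_of_neg (hsin t ht) (hcos t ht)
  set V : ℝ → ℝ := fun t =>
    ((Real.log (1 + p t^2) / 2 - p0 * Real.arctan (p t))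
      - (Real.log (1 + p0^2) / 2 - p0 * Real.arctan p0))
    + α * p0 * ((q t - p0 * Real.log (q t)) - (p0 - p0 * Real.log p0)) with hV
  have hVnn : ∀ t ∈ Ioo s b, 0 ≤ V t := by
    intro t ht
    have h1 := (cl_A p0 (p t)).1
    have h2 := (cl_B p0 (q t) hp0 (hqpos t ht)).1
    simp only [hV]
    positivity
  have hVle : ∀ t ∈ Ioo s b, V t ≤ (p t - p0)^2 / 2 + α * p0 * ((q t - p0)^2 / q t) := by
    intro t ht
    have h1 := (cl_A p0 (p t)).2
    have h2 := (cl_B p0 (q t) hp0 (hqpos t ht)).2.2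
    simp only [hV]
    gcongr
  set D : ℝ → ℝ := fun t => (-Real.cos (θ t) / x t) *
    ((p t - p0) * (α * p t - α * p0^2 / q t + x t^2 * (q t - p t) / 2)
      + α * p0 * (1 - p0 / q t) * (q t - p t)) with hD
  have dV : ∀ t ∈ Ioo s b, HasDerivAt V (D t) t := by
    intro t ht
    obtain ⟨hx, hy, dx, dy, dt⟩ := hsol t ht
    have hcn := (hcos t ht).ne
    have hqp := hqpos t ht
    have dp := dt.sin.div dt.cos hcn
    have dp' : HasDerivAt p ((1 + p t^2) * ((x t / 2 - α / x t) * Real.sin (θ t)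
      + (γ / y t - y t / 2) * Real.cos (θ t))) t := by
      refine dp.congr_deriv ?_
      simp only [hp]
      field_simp
      ring
    have dq : HasDerivAt q ((Real.sin (θ t) * x t - y t * Real.cos (θ t)) / x t^2) t :=
      dy.div dx hx.ne'
    have d1 := ((((dp'.pow 2).const_add 1).log (x := t)
      (by simp only [Pi.pow_apply]; positivity)).div_const 2).sub
      (dp'.arctan.const_mul p0)
    have d2 := dq.sub ((dq.log hqp.ne').const_mul p0)
    have d3 := (d1.sub_const (Real.log (1 + p0^2) / 2 - p0 * Real.arctan p0)).add
      ((d2.sub_const (p0 - p0 * Real.log p0)).const_mul (α * p0))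
    refine d3.congr_deriv ?_
    have hpe : Real.sin (θ t) = p t * Real.cos (θ t) := by
      simp only [hp]; field_simp
    have hqe : y t = q t * x t := by
      simp only [hq]; field_simp
    simp only [hD, Pi.pow_apply]
    rw [hpe, hqe, hγe]
    generalize p t = P at *
    generalize q t = Q at *
    have : 1 + P^2 ≠ 0 := by positivity
    simp
    field_simp
    ring
  have hDge : ∀ t ∈ Ioo s b, (-Real.cos (θ t) / x t) * (V t / 2) ≤ D t := by
    intro t ht
    obtain ⟨hx, hy, dx, dy, dt⟩ := hsol t ht
    have hx2 : x t^2 * q t ≤ α * p0 := by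
      have e1 : x t^2 * q t = x t * y t := by simp only [hq]; field_simp
      have e2 : α * p0 = √α * √γ := by rw [← hp0a, ← mul_assoc, ha2]
      rw [e1, e2]; exact hxy t ht
    have h := cl_D α p0 (p t) (q t) (x t) hα1 (hqpos t ht) (hxs t ht) hx2
    simp only [hD]
    apply mul_le_mul_of_nonneg_left _ (div_nonneg (by linarith [hcos t ht]) hx.le)
    refine le_trans ?_ h
    have := hVle t ht
    have : 1 * (p t - p0)^2 ≤ α * (p t - p0)^2 := by gcongr
    nlinarith [sq_nonneg (p t - p0)]
  have hpb : ∃ K, ∀ t ∈ Ioo s b, V t ≤ K := by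
    have b1 : ∀ t ∈ Ioo s b, lam ≤ q t^2 := by
      intro t ht
      have hx := (hsol t ht).1
      simp only [hq]
      rw [div_pow, le_div_iff₀ (by positivity)]
      exact q1 t ht
    have b2 : ∀ t ∈ Ioo s b, mu * q t^2 ≤ 1 := by
      intro t ht
      have hx := (hsol t ht).1
      simp only [hq]
      rw [div_pow, ← mul_div_assoc, div_le_one (by positivity)]
      exact q2 t ht
    have b3 : ∀ t ∈ Ioo s b, mu * (p t * q t) ≤ 1 := by
      intro t ht
      have hx := (hsol t ht).1
      have hC := hcos t ht
      have h := r2 t ht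
      have e : mu * (p t * q t) = (mu * (y t * Real.sin (θ t))) / (x t * Real.cos (θ t)) := by
        simp only [hp, hq]
        field_simp
      rw [e, div_le_one_of_neg (mul_neg_of_pos_of_neg hx hC)]
      exact h
    have hl' : 0 < √lam := by positivity
    have hm' : 0 < √mu := by positivity
    refine ⟨((1 / (mu * √lam))^2 + p0^2) / 2 + α * p0 * (1/√mu + p0^2/√lam), fun t ht => ?_⟩
    have hqp := hqpos t ht
    have hpp := hppos t ht
    have c1 : √lam ≤ q t := Real.sqrt_le_iff.2 ⟨hqp.le, b1 t ht⟩
    have c2 : q t ≤ 1 / √mu := by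
      rw [le_div_iff₀ hm']
      have : (q t * √mu)^2 ≤ 1 := by
        rw [mul_pow, Real.sq_sqrt hmu.le]; linarith [b2 t ht]
      exact (sq_le_one_iff₀ (by positivity)).1 this
    have c3 : p t ≤ 1 / (mu * √lam) := by
      rw [le_div_iff₀ (by positivity)]
      have : p t * (mu * √lam) ≤ p t * (mu * q t) := by gcongr
      linarith [b3 t ht]
    refine (hVle t ht).trans ?_
    have e : (q t - p0)^2 / q t ≤ q t + p0^2 / q t := by
      rw [div_le_iff₀ hqp, add_mul, div_mul_cancel₀ _ hqp.ne']
      nlinarith [mul_pos hp0 hqp]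
    have e2 : (p t - p0)^2 ≤ p t^2 + p0^2 := by nlinarith [mul_pos hp0 hpp]
    have e3 : (q t - p0)^2 / q t ≤ 1/√mu + p0^2/√lam := by
      refine e.trans ?_
      gcongr
    have e4 : p t^2 ≤ (1 / (mu * √lam))^2 := by gcongr
    gcongr
    linarith
  obtain ⟨K, hK⟩ := hpb
  have hfin := cl_nonpos (f := fun t => V t^2 * x t)
    (f' := fun t => 2 * V t * D t * x t + V t^2 * Real.cos (θ t))
    (fun t ht => by
      refine (((dV t ht).pow 2).mul (hsol t ht).2.2.1).congr_deriv ?_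
      simp only [Nat.cast_ofNat, Nat.add_one_sub_one, pow_one, Pi.pow_apply])
    (fun t ht => by
      have hx := (hsol t ht).1
      have h := hDge t ht
      have h2 := hVnn t ht
      have h3 : x t * ((-Real.cos (θ t) / x t) * (V t / 2)) ≤ x t * D t := by gcongr
      have e : x t * ((-Real.cos (θ t) / x t) * (V t / 2)) = -Real.cos (θ t) * V t / 2 := by
        field_simp
      rw [e] at h3
      have h4 := mul_le_mul_of_nonneg_left h3 h2
      linarith) (by
      have h1 : Tendsto (fun t => K^2 * x t) (𝓝[<] b) (𝓝 0) := by
        simpa using hx0.const_mul (K^2)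
      refine squeeze_zero' ?_ ?_ h1
      · filter_upwards [Ioo_mem_nhdsLT hsb] with t ht
        have hx := (hsol t ht).1
        positivity
      · filter_upwards [Ioo_mem_nhdsLT hsb] with t ht
        have hx := (hsol t ht).1
        have := hVnn t ht
        have := hK t ht
        gcongr)
  intro t ht
  have hx := (hsol t ht).1
  have hV0 : V t = 0 := by
    have h := hfin t ht
    by_contra hne
    have : 0 < V t^2 * x t := by positivity
    linarith
  have hB := cl_B p0 (q t) hp0 (hqpos t ht)
  have hA := (cl_A p0 (p t)).1
  have hqq : q t = p0 := by
    apply hB.2.1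
    by_contra h
    push Not at h
    have : 0 < α * p0 * ((q t - p0 * Real.log (q t)) - (p0 - p0 * Real.log p0)) := by positivity
    simp only [hV] at hV0
    linarith
  have : y t = p0 * x t := by
    rw [← hqq]; simp only [hq]; field_simp
  rw [this, ← hp0a]
  ring

/-- any solution of the self-shrinker profile system on `(a, b)` with
`(x(t), y(t)) → (0, 0)` as `t → b` lies on the cone line
`√(m−1)·y = √(n−1)·x`, i.e. the only solution through the origin is the line
`y = √((n−1)/(m−1))·x`. -/
theorem sol_through_origin_is_cone_line (m n : ℕ) (hm : 2 ≤ m) (hn : 2 ≤ n)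
    (a b : ℝ) (hab : a < b) (x y θ : ℝ → ℝ)
    (hsol : SysSol m n x y θ (Ioo a b))
    (hlim : Tendsto (fun t => (x t, y t)) (𝓝[Ioo a b] b) (𝓝 ((0 : ℝ), (0 : ℝ)))) :
    ∀ t ∈ Ioo a b, Real.sqrt ((m : ℝ) - 1) * y t = Real.sqrt ((n : ℝ) - 1) * x t := by
  obtain ⟨k, rfl⟩ := Nat.exists_eq_add_of_le' hm
  obtain ⟨l, rfl⟩ := Nat.exists_eq_add_of_le' hn
  have ek : ((k + 2 : ℕ) : ℝ) - 1 = (k:ℝ) + 1 := by push_cast; ring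
  have el : ((l + 2 : ℕ) : ℝ) - 1 = (l:ℝ) + 1 := by push_cast; ring
  unfold SysSol at hsol
  simp only [ek, el] at hsol ⊢
  rw [nhdsWithin_Ioo_eq_nhdsLT hab] at hlim
  have hx0 : Tendsto x (𝓝[<] b) (𝓝 0) := (continuous_fst.tendsto _).comp hlim
  have hy0 : Tendsto y (𝓝[<] b) (𝓝 0) := (continuous_snd.tendsto _).comp hlim
  have e1 : ∀ᶠ t in 𝓝[<] b, x t^2 < 1/2 := by
    have := hx0.pow 2
    exact this.eventually_lt_const (by norm_num)
  have e2 : ∀ᶠ t in 𝓝[<] b, y t^2 < 1/2 := by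
    have := hy0.pow 2
    exact this.eventually_lt_const (by norm_num)
  have e3 : ∀ᶠ t in 𝓝[<] b, x t * y t < √((k:ℝ)+1) * √((l:ℝ)+1) := by
    have := hx0.mul hy0
    exact this.eventually_lt_const (by rw [mul_zero]; positivity)
  obtain ⟨s, hs, hsub⟩ := (mem_nhdsLT_iff_exists_mem_Ico_Ioo_subset hab).1
    (e1.and (e2.and e3))
  have hsol' := fun t (ht : t ∈ Ioo s b) => hsol t ⟨hs.1.trans_lt ht.1, ht.2⟩
  have hnear := cl_core k l s b hs.2 x y θ hsol' hx0 hy0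
    (fun t ht => (hsub ht).1.le) (fun t ht => (hsub ht).2.1.le) (fun t ht => (hsub ht).2.2.le)
  intro t ht
  by_cases hts : s < t
  · exact hnear t ⟨hts, ht.2⟩
  push Not at hts
  have hu : (s + b) / 2 ∈ Ioo s b := ⟨by linarith [hs.2], by linarith [hs.2]⟩
  set u := (s + b) / 2
  obtain ⟨hx, hy, dx, dy, dt⟩ := hsol' u hu
  refine cl_back ((k:ℝ)+1) ((l:ℝ)+1) (by linarith [(Nat.cast_nonneg k : (0:ℝ) ≤ k)])
    (by linarith [(Nat.cast_nonneg l : (0:ℝ) ≤ l)]) t u (by linarith [hu.1]) x y θ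
    (fun r hr => hsol r ⟨ht.1.trans_le hr.1, hr.2.trans_lt hu.2⟩) (hnear u hu) ?_
  refine (dy.const_mul (√((k:ℝ)+1))).unique ?_
  refine (dx.const_mul (√((l:ℝ)+1))).congr_of_eventuallyEq ?_
  filter_upwards [Ioo_mem_nhds hu.1 hu.2] with r hr
  exact hnear r hr
end

section
/- Let n ≥ 2 be an integer. There exists R₀ > 0 such that for all R ≥ R₀ the angle θ_R is strictly decreasing as long as the curve stays strictly below the diagonal and the total turning is less than π: precisely, θ_R'(t) < 0 for every t ∈ [0, T_R) such that θ_R(τ) > −5π/4 for all τ ∈ [0, t] and x_R(τ) > y_R(τ) for all τ ∈ (0, t]. -/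
/-- The shooting solution of the self-shrinker profile system (with `m = n`) on `[0, T)`:
`x' = cos θ`, `y' = sin θ`, `θ' = (x/2 − (n−1)/x)·sin θ + ((n−1)/y − y/2)·cos θ`,
with `x, y > 0`, and initial conditions `x 0 = y 0 = R/√2`, `θ 0 = −π/4`. -/
def ShootingSol (n : ℕ) (R T : ℝ) (x y θ : ℝ → ℝ) : Prop :=
  0 < T ∧ x 0 = R / Real.sqrt 2 ∧ y 0 = R / Real.sqrt 2 ∧ θ 0 = -(Real.pi / 4) ∧
  ∀ t ∈ Set.Ico 0 T, 0 < x t ∧ 0 < y t ∧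
    HasDerivAt x (Real.cos (θ t)) t ∧ HasDerivAt y (Real.sin (θ t)) t ∧
    HasDerivAt θ ((x t / 2 - ((n : ℝ) - 1) / x t) * Real.sin (θ t)
      + (((n : ℝ) - 1) / y t - y t / 2) * Real.cos (θ t)) t

/-- right-hand side of the angle equation -/
noncomputable def angF (a : ℝ) (x y θ : ℝ → ℝ) (t : ℝ) : ℝ :=
  (x t / 2 - a / x t) * Real.sin (θ t) + (a / y t - y t / 2) * Real.cos (θ t)

lemma le_of_deriv_np {g g' : ℝ → ℝ} {a b : ℝ} (hab : a ≤ b)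
    (hg : ∀ s ∈ Set.Icc a b, HasDerivAt g (g' s) s) (hn : ∀ s ∈ Set.Icc a b, g' s ≤ 0) :
    g b ≤ g a := by
  have h : AntitoneOn g (Set.Icc a b) := by
    apply antitoneOn_of_deriv_nonpos (convex_Icc a b)
    · exact fun s hs => (hg s hs).continuousAt.continuousWithinAt
    · exact fun s hs => (hg s (interior_subset hs)).differentiableAt.differentiableWithinAt
    · intro s hs
      rw [(hg s (interior_subset hs)).deriv]
      exact hn s (interior_subset hs)
  exact h (Set.left_mem_Icc.2 hab) (Set.right_mem_Icc.2 hab) hab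

/-- upper bound by slope -/
lemma le_add_of_deriv_le {g g' : ℝ → ℝ} {a b C : ℝ} (hab : a ≤ b)
    (hg : ∀ s ∈ Set.Icc a b, HasDerivAt g (g' s) s) (hn : ∀ s ∈ Set.Icc a b, g' s ≤ C) :
    g b ≤ g a + C * (b - a) := by
  have := le_of_deriv_np (g := fun s => g s - C * s) (g' := fun s => g' s - C * 1) hab
    (fun s hs => (hg s hs).sub ((hasDerivAt_id s).const_mul C))
    (fun s hs => by have := hn s hs; linarith)
  linarith

lemma ge_add_of_le_deriv {g g' : ℝ → ℝ} {a b C : ℝ} (hab : a ≤ b)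
    (hg : ∀ s ∈ Set.Icc a b, HasDerivAt g (g' s) s) (hn : ∀ s ∈ Set.Icc a b, C ≤ g' s) :
    g a + C * (b - a) ≤ g b := by
  have := le_add_of_deriv_le (g := fun s => - g s) (g' := fun s => - g' s) (C := -C) hab
    (fun s hs => (hg s hs).neg) (fun s hs => by have := hn s hs; linarith)
  linarith

lemma exists_eq_of_le {g : ℝ → ℝ} {a b v : ℝ} (hab : a ≤ b)
    (hg : ∀ s ∈ Set.Icc a b, ContinuousAt g s) (h1 : v ≤ g a) (h2 : g b ≤ v) :
    ∃ s ∈ Set.Icc a b, g s = v := by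
  have := intermediate_value_Icc' hab (f := g) (fun s hs => (hg s hs).continuousWithinAt)
  exact this ⟨h2, h1⟩

/-- first phase -/
lemma phase_one (a R : ℝ) (ha : 1 ≤ a) (hR : 1000 * (a + 1) ≤ R) (x y θ : ℝ → ℝ) (b : ℝ)
    (hb : 0 ≤ b)
    (hx0 : x 0 = R / Real.sqrt 2) (hy0 : y 0 = R / Real.sqrt 2) (hθ0 : θ 0 = -(Real.pi / 4))
    (hx : ∀ s ∈ Set.Icc 0 b, HasDerivAt x (Real.cos (θ s)) s)
    (hy : ∀ s ∈ Set.Icc 0 b, HasDerivAt y (Real.sin (θ s)) s)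
    (hθ : ∀ s ∈ Set.Icc 0 b, HasDerivAt θ (angF a x y θ s) s)
    (hr : ∀ s ∈ Set.Icc 0 b, -(Real.pi / 2) ≤ θ s ∧ θ s ≤ -(Real.pi / 4)) :
    b ≤ 7 / R ∧ angF a x y θ b < 0 := by
  have hRpos : 1000 ≤ R := by linarith
  have h2 : Real.sqrt 2 * Real.sqrt 2 = 2 := Real.mul_self_sqrt (by norm_num)
  have h2p : 0 < Real.sqrt 2 := by positivity
  have h2u : Real.sqrt 2 ≤ 1.42 := by nlinarith
  have h2l : 1.4 ≤ Real.sqrt 2 := by nlinarith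
  have hR2 : R / Real.sqrt 2 = R * Real.sqrt 2 / 2 := by
    field_simp; nlinarith
  have hR2l : 0.7 * R ≤ R / Real.sqrt 2 := by rw [hR2]; nlinarith
  have key : ∀ s ∈ Set.Icc 0 b, s ≤ 1 → angF a x y θ s ≤ -(R / 8) := by
    intro s hs hs1
    have hsub : Set.Icc 0 s ⊆ Set.Icc 0 b := Set.Icc_subset_Icc_right hs.2
    have hxs : 0.7 * R ≤ x s := by
      have := ge_add_of_le_deriv (C := 0) hs.1 (fun u hu => hx u (hsub hu)) (fun u hu => by
        have := hr u (hsub hu)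
        apply Real.cos_nonneg_of_neg_pi_div_two_le_of_le <;> linarith [Real.pi_pos])
      rw [hx0] at this; linarith
    have hys : 0.7 * R - 1 ≤ y s := by
      have := ge_add_of_le_deriv (C := -1) hs.1 (fun u hu => hy u (hsub hu)) (fun u hu =>
        Real.neg_one_le_sin _)
      rw [hy0] at this; linarith
    have hc : 0 ≤ Real.cos (θ s) := by
      have := hr s hs
      apply Real.cos_nonneg_of_neg_pi_div_two_le_of_le <;> linarith [Real.pi_pos]
    have hsn : Real.sin (θ s) ≤ -(0.7) := by
      have h := hr s hs
      have : Real.sin (θ s) ≤ Real.sin (-(Real.pi / 4)) :=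
        Real.sin_le_sin_of_le_of_le_pi_div_two (by linarith) (by linarith [Real.pi_pos]) h.2
      rw [Real.sin_neg, Real.sin_pi_div_four] at this
      linarith
    have hxp : 0 < x s := by linarith
    have hyp : 0 < y s := by linarith
    have e1 : a / x s ≤ 1 := by rw [div_le_one hxp]; linarith
    have e2 : a / y s ≤ 1 := by rw [div_le_one hyp]; linarith
    have e3 : (a / y s - y s / 2) * Real.cos (θ s) ≤ 0 :=
      mul_nonpos_of_nonpos_of_nonneg (by linarith) hc
    have e4 : (x s / 2 - a / x s) * Real.sin (θ s) ≤ (x s / 2 - a / x s) * (-(0.7)) :=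
      mul_le_mul_of_nonneg_left hsn (by linarith)
    unfold angF
    linarith
  have small : ∀ s ∈ Set.Icc 0 b, s ≤ 1 → s ≤ 7 / R := by
    intro s hs hs1
    have hsub : Set.Icc 0 s ⊆ Set.Icc 0 b := Set.Icc_subset_Icc_right hs.2
    have := le_add_of_deriv_le (C := -(R / 8)) hs.1 (fun u hu => hθ u (hsub hu))
      (fun u hu => key u (hsub hu) (hu.2.trans hs1))
    have h3 := (hr s hs).1
    rw [hθ0] at this
    rw [le_div_iff₀ (by linarith)]
    linarith [Real.pi_lt_d2]
  have hb1 : b ≤ 1 := by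
    by_contra hcon
    push Not at hcon
    have := small 1 ⟨by norm_num, hcon.le⟩ le_rfl
    rw [le_div_iff₀ (by linarith)] at this
    linarith
  refine ⟨small b ⟨hb, le_rfl⟩ hb1, ?_⟩
  have := key b ⟨hb, le_rfl⟩ hb1
  linarith

set_option maxHeartbeats 2000000 in
/-- second phase -/
lemma phase_two (a R : ℝ) (ha : 1 ≤ a) (hR : 1000 * (a + 1) ≤ R)
    (hR' : 1000 * Real.exp (20 * a ^ 2) ≤ R) (x y θ : ℝ → ℝ) (t₀ t₂ : ℝ)
    (h02 : t₀ ≤ t₂)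
    (hx0 : x t₀ ≤ 0.72 * R) (hP0 : 1.4 * R ≤ x t₀ + y t₀) (hD0 : x t₀ - y t₀ ≤ 14 / R)
    (hθ0 : θ t₀ = -(Real.pi / 2)) (hθ2 : θ t₂ = -Real.pi)
    (hxp : ∀ s ∈ Set.Icc t₀ t₂, 0 < x s) (hyp : ∀ s ∈ Set.Icc t₀ t₂, 0 < y s)
    (hxy : ∀ s ∈ Set.Icc t₀ t₂, y s ≤ x s)
    (hf : ∀ s ∈ Set.Icc t₀ t₂, angF a x y θ s ≤ 0)
    (hx : ∀ s ∈ Set.Icc t₀ t₂, HasDerivAt x (Real.cos (θ s)) s)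
    (hy : ∀ s ∈ Set.Icc t₀ t₂, HasDerivAt y (Real.sin (θ s)) s)
    (hθ : ∀ s ∈ Set.Icc t₀ t₂, HasDerivAt θ (angF a x y θ s) s) :
    x t₂ ^ 2 < 2 * a := by
  have hRp : 1000 ≤ R := by linarith
  have hR0 : 0 < R := by linarith
  have sub : ∀ {u v : ℝ}, u ∈ Set.Icc t₀ t₂ → v ∈ Set.Icc t₀ t₂ → Set.Icc u v ⊆ Set.Icc t₀ t₂ :=
    fun hu hv => Set.Icc_subset_Icc hu.1 hv.2
  have m0 : t₀ ∈ Set.Icc t₀ t₂ := ⟨le_rfl, h02⟩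
  have m2 : t₂ ∈ Set.Icc t₀ t₂ := ⟨h02, le_rfl⟩
  have hcs : ∀ s ∈ Set.Icc t₀ t₂, Real.cos (θ s) ≤ 0 ∧ Real.sin (θ s) ≤ 0 := by
    intro s hs
    have h1 := le_of_deriv_np hs.1 (fun u hu => hθ u (sub m0 hs hu)) (fun u hu => hf u (sub m0 hs hu))
    have h2 := le_of_deriv_np hs.2 (fun u hu => hθ u (sub hs m2 hu)) (fun u hu => hf u (sub hs m2 hu))
    rw [hθ0] at h1
    rw [hθ2] at h2
    constructor
    · rw [← Real.cos_neg]
      apply Real.cos_nonpos_of_pi_div_two_le_of_le <;> linarith [Real.pi_pos]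
    · apply Real.sin_nonpos_of_nonpos_of_neg_pi_le <;> linarith [Real.pi_pos]
  obtain ⟨A, hA⟩ : ∃ A : ℝ → ℝ, ∀ s, A s = -(Real.cos (θ s) + Real.sin (θ s)) := ⟨_, fun s => rfl⟩
  obtain ⟨B, hB⟩ : ∃ B : ℝ → ℝ, B = fun s => Real.cos (θ s) - Real.sin (θ s) := ⟨_, rfl⟩
  obtain ⟨P, hP⟩ : ∃ P : ℝ → ℝ, P = fun s => x s + y s := ⟨_, rfl⟩
  obtain ⟨D, hD⟩ : ∃ D : ℝ → ℝ, D = fun s => x s - y s := ⟨_, rfl⟩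
  have hA1 : ∀ s ∈ Set.Icc t₀ t₂, 1 ≤ A s := by
    intro s hs
    obtain ⟨h1, h2⟩ := hcs s hs
    rw [hA]
    nlinarith [Real.sin_sq_add_cos_sq (θ s), mul_nonneg_of_nonpos_of_nonpos h1 h2]
  have hA2 : ∀ s, A s ≤ 3 / 2 := by
    intro s
    rw [hA]
    nlinarith [Real.sin_sq_add_cos_sq (θ s), sq_nonneg (Real.cos (θ s) - Real.sin (θ s))]
  have dP : ∀ s ∈ Set.Icc t₀ t₂, HasDerivAt P (-A s) s := by
    intro s hs
    rw [hA, hP, neg_neg]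
    exact (hx s hs).add (hy s hs)
  have dD : ∀ s ∈ Set.Icc t₀ t₂, HasDerivAt D (B s) s := by
    intro s hs
    rw [hB, hD]
    exact (hx s hs).sub (hy s hs)
  have dB : ∀ s ∈ Set.Icc t₀ t₂, HasDerivAt B (A s * angF a x y θ s) s := by
    intro s hs
    rw [hA, hB]
    exact ((hθ s hs).cos.sub (hθ s hs).sin).congr_deriv (by ring)
  have hfe : ∀ s ∈ Set.Icc t₀ t₂, angF a x y θ s =
      -(P s * B s / 4) * (1 - 2 * (a / (x s * y s))) - (D s * A s / 4) * (1 + 2 * (a / (x s * y s))) := by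
    intro s hs
    have := (hxp s hs).ne'
    have := (hyp s hs).ne'
    rw [hA, hB, hP, hD, angF]
    field_simp
    ring
  have Ppos : ∀ s ∈ Set.Icc t₀ t₂, 0 < P s := by
    intro s hs; rw [hP]; linarith [hxp s hs, hyp s hs]
  have Dpos : ∀ s ∈ Set.Icc t₀ t₂, 0 ≤ D s := by
    intro s hs; rw [hD]; linarith [hxy s hs]
  have antiB : ∀ u ∈ Set.Icc t₀ t₂, ∀ v ∈ Set.Icc t₀ t₂, u ≤ v → B v ≤ B u := by
    intro u hu v hv huv
    apply le_of_deriv_np huv (fun s hs => dB s (sub hu hv hs))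
    intro s hs
    exact mul_nonpos_of_nonneg_of_nonpos (by linarith [hA1 s (sub hu hv hs)]) (hf s (sub hu hv hs))
  have antiP : ∀ u ∈ Set.Icc t₀ t₂, ∀ v ∈ Set.Icc t₀ t₂, u ≤ v → P v ≤ P u := by
    intro u hu v hv huv
    apply le_of_deriv_np huv (fun s hs => dP s (sub hu hv hs))
    intro s hs
    linarith [hA1 s (sub hu hv hs)]
  have antiX : ∀ u ∈ Set.Icc t₀ t₂, ∀ v ∈ Set.Icc t₀ t₂, u ≤ v → x v ≤ x u := by
    intro u hu v hv huv
    apply le_of_deriv_np huv (fun s hs => hx s (sub hu hv hs))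
    intro s hs
    exact (hcs s (sub hu hv hs)).1
  have antiY : ∀ u ∈ Set.Icc t₀ t₂, ∀ v ∈ Set.Icc t₀ t₂, u ≤ v → y v ≤ y u := by
    intro u hu v hv huv
    apply le_of_deriv_np huv (fun s hs => hy s (sub hu hv hs))
    intro s hs
    exact (hcs s (sub hu hv hs)).2
  have antiD : ∀ u ∈ Set.Icc t₀ t₂, ∀ v ∈ Set.Icc t₀ t₂, u ≤ v → B u ≤ 0 → D v ≤ D u := by
    intro u hu v hv huv hBu
    apply le_of_deriv_np huv (fun s hs => dD s (sub hu hv hs))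
    intro s hs
    exact (antiB u hu s (sub hu hv hs) hs.1).trans hBu
  have B0 : B t₀ = 1 := by
    rw [hB]; simp [hθ0]
  have B2 : B t₂ = -1 := by
    rw [hB]; simp [hθ2]
  -- step L1
  have L1 : ∀ s ∈ Set.Icc t₀ t₂, R ≤ P s → 0 ≤ B s → D s ≤ 22 / R := by
    intro s hs hPs hBs
    have := le_of_deriv_np (g := fun u => D u + (8 / R) * B u)
      (g' := fun u => B u + (8 / R) * (A u * angF a x y θ u)) hs.1
      (fun u hu => (dD u (sub m0 hs hu)).add ((dB u (sub m0 hs hu)).const_mul _)) ?_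
    · simp only [B0] at this
      have e1 : D t₀ ≤ 14 / R := by rw [hD]; exact hD0
      have e2 : 0 ≤ 8 / R * B s := by positivity
      have e3 : 14 / R + 8 / R * 1 = 22 / R := by ring
      linarith
    · intro u hu
      have hu' := sub m0 hs hu
      have hPu : R ≤ P u := hPs.trans (antiP u hu' s hs hu.2)
      have hBu : 0 ≤ B u := hBs.trans (antiB u hu' s hs hu.2)
      have hxu : x u ≤ 0.72 * R := (antiX _ m0 _ hu' hu.1).trans hx0
      have hyu : 0.28 * R ≤ y u := by rw [hP] at hPu; simp only at hPu; linarith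
      have hprod : 4 * a ≤ x u * y u := by nlinarith [hxy u hu']
      have hpp : 0 < x u * y u := by nlinarith
      have ha4 : a / (x u * y u) ≤ 1 / 4 := by
        rw [div_le_iff₀ hpp]; linarith
      have ha0 : 0 ≤ a / (x u * y u) := by positivity
      have hf1 : angF a x y θ u ≤ -(R * B u / 8) := by
        rw [hfe u hu']
        have e1 : 0 ≤ (D u * A u / 4) * (1 + 2 * (a / (x u * y u))) := by
          have := Dpos u hu'
          have := hA1 u hu'
          positivity
        have e2 : (P u * B u / 4) * (1 / 2) ≤ (P u * B u / 4) * (1 - 2 * (a / (x u * y u))) := by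
          apply mul_le_mul_of_nonneg_left (by linarith)
          have := Ppos u hu'
          positivity
        have e3 : R * B u ≤ P u * B u := mul_le_mul_of_nonneg_right hPu hBu
        linarith
      have hf2 : A u * angF a x y θ u ≤ -(R * B u / 8) := by
        nlinarith [hf u hu', hA1 u hu']
      have : (8 / R) * (A u * angF a x y θ u) ≤ (8 / R) * (-(R * B u / 8)) :=
        mul_le_mul_of_nonneg_left hf2 (by positivity)
      have e : (8 / R) * (-(R * B u / 8)) = - B u := by field_simp
      linarith
  have L2 : ∀ s ∈ Set.Icc t₀ t₂, R ≤ P s → D s ≤ 22 / R := by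
    intro s hs hPs
    rcases le_total 0 (B s) with h | h
    · exact L1 s hs hPs h
    · obtain ⟨u, hu, hBu⟩ := exists_eq_of_le (v := 0) hs.1
        (fun u hu => (dB u (sub m0 hs hu)).continuousAt) (by rw [B0]; norm_num) h
      have hu' := sub m0 hs hu
      exact (antiD u hu' s hs hu.2 hBu.le).trans
        (L1 u hu' (hPs.trans (antiP u hu' s hs hu.2)) hBu.ge)
  have L3 : ∀ s ∈ Set.Icc t₀ t₂, D s ≤ 132 / R := by
    intro s hs
    have h22 : 22 / R ≤ 132 / R := by gcongr; norm_num
    rcases le_total R (P s) with h | h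
    · exact (L2 s hs h).trans h22
    · obtain ⟨u, hu, hPu⟩ := exists_eq_of_le (v := R) hs.1
        (fun u hu => (dP u (sub m0 hs hu)).continuousAt) (by rw [hP]; simp only; linarith) h
      have hu' := sub m0 hs hu
      have hDu := L2 u hu' hPu.ge
      rcases le_total (B u) 0 with h' | h'
      · exact (antiD u hu' s hs hu.2 h').trans (hDu.trans h22)
      · have e1 := ge_add_of_le_deriv (C := B u) hu.1 (fun v hv => dD v (sub m0 hu' hv))
          (fun v hv => antiB v (sub m0 hu' hv) u hu' hv.2)
        have e2 := ge_add_of_le_deriv (C := -2) hu.1 (fun v hv => dP v (sub m0 hu' hv))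
          (fun v hv => by linarith [hA2 v])
        have e3 := le_add_of_deriv_le (C := B u) hu.2 (fun v hv => dD v (sub hu' hs hv))
          (fun v hv => antiB u hu' v (sub hu' hs hv) hv.1)
        have e4 := le_add_of_deriv_le (C := -1) hu.2 (fun v hv => dP v (sub hu' hs hv))
          (fun v hv => by linarith [hA1 v (sub hu' hs hv)])
        have e5 := Dpos t₀ m0
        have e6 := Ppos s hs
        have e7 : 1.4 * R ≤ P t₀ := by rw [hP]; exact hP0
        have f1 : R / 5 ≤ u - t₀ := by linarith
        have f2 : s - u ≤ R := by linarith
        have f3 : B u * (R / 5) ≤ 22 / R := by nlinarith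
        have f4 : B u * (s - u) ≤ B u * R := mul_le_mul_of_nonneg_left f2 h'
        have f5 : 132 / R = 22 / R + 5 * (22 / R) := by ring
        linarith
  -- step 2b
  by_contra hcon
  push Not at hcon
  have hD1 : ∀ s ∈ Set.Icc t₀ t₂, D s ≤ 0.2 := fun s hs => (L3 s hs).trans (by
    rw [div_le_iff₀ hR0]; linarith)
  have hx2 : ∀ s ∈ Set.Icc t₀ t₂, 2 * a ≤ x s ^ 2 := by
    intro s hs
    have h1 := antiX s hs t₂ m2 hs.2
    have h2 := hxp t₂ m2
    nlinarith
  have hx14 : ∀ s ∈ Set.Icc t₀ t₂, 1.4 ≤ x s := by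
    intro s hs
    nlinarith [hx2 s hs, hxp s hs]
  have hyx : ∀ s ∈ Set.Icc t₀ t₂, x s / 2 ≤ y s := by
    intro s hs
    have h1 := hD1 s hs
    have h2 := hx14 s hs
    rw [hD] at h1; simp only at h1
    linarith
  have K1 : ∀ s ∈ Set.Icc t₀ t₂, 4 * a ≤ x s * y s → -B s ≤ 300 / R := by
    intro s hs h4
    rcases le_total 0 (B s) with h | h
    · have : 0 ≤ 300 / R := by positivity
      linarith
    have hpp : 0 < x s * y s := by linarith
    have ha4 : a / (x s * y s) ≤ 1 / 4 := by
      rw [div_le_iff₀ hpp]; linarith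
    have hf1 := hf s hs
    rw [hfe s hs] at hf1
    have hP2 : 2 ≤ P s := by
      rw [hP]; simp only
      nlinarith [hx14 s hs, hyx s hs]
    have hDs := Dpos s hs
    have hAs := hA1 s hs
    have e1 : (P s * (-B s) / 4) * (1 / 2) ≤ (P s * (-B s) / 4) * (1 - 2 * (a / (x s * y s))) := by
      apply mul_le_mul_of_nonneg_left (by linarith)
      have : 0 ≤ P s * (-B s) := mul_nonneg (by linarith) (by linarith)
      linarith
    have e2 : (D s * A s / 4) * (1 + 2 * (a / (x s * y s))) ≤ (D s * A s / 4) * (3 / 2) := by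
      apply mul_le_mul_of_nonneg_left (by linarith)
      positivity
    have e3 : D s * A s ≤ D s * (3 / 2) := mul_le_mul_of_nonneg_left (hA2 s) hDs
    have e4 : 2 * (-B s) ≤ P s * (-B s) := mul_le_mul_of_nonneg_right hP2 (by linarith)
    have e5 : -B s ≤ (9 / 4) * D s := by linarith
    have e6 := L3 s hs
    have e7 : (300 : ℝ) / R = (9 / 4) * (132 / R) + 3 / R := by ring
    have e8 : 0 ≤ 3 / R := by positivity
    linarith
  have h300 : 300 / R < 1 := by rw [div_lt_one hR0]; linarith
  rcases le_total (4 * a) (x t₂ * y t₂) with h4 | h4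
  · have := K1 t₂ m2 h4
    rw [B2] at this
    linarith
  obtain ⟨t₃, h3, hxy3⟩ := exists_eq_of_le (g := fun s => x s * y s) (v := 4 * a) h02
    (fun u hu => ((hx u hu).mul (hy u hu)).continuousAt) (by
      have h1 := hyx t₀ m0
      have h2 := hxy t₀ m0
      nlinarith) h4
  have hB3 := K1 t₃ h3 hxy3.ge
  obtain ⟨t₄, h4m, hB4, hB4'⟩ : ∃ t₄ ∈ Set.Icc t₃ t₂, B t₄ ≤ 0 ∧ -B t₄ ≤ 300 / R := by
    rcases le_total (B t₃) 0 with h | h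
    · exact ⟨t₃, ⟨le_rfl, h3.2⟩, h, hB3⟩
    · obtain ⟨u, hu, hBu⟩ := exists_eq_of_le (v := 0) h3.2
        (fun u hu => (dB u (sub h3 m2 hu)).continuousAt) h (by rw [B2]; norm_num)
      exact ⟨u, hu, hBu.le, by rw [hBu, neg_zero]; positivity⟩
  have h4' := sub h3 m2 h4m
  have hP3 : ∀ s ∈ Set.Icc t₄ t₂, P s ≤ 6 * a := by
    intro s hs
    have hs' := sub h4' m2 hs
    have h34 : t₃ ≤ s := h4m.1.trans hs.1
    refine (antiP t₃ h3 s hs' h34).trans ?_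
    have h1 := hyx t₃ h3
    have h2 := hxy t₃ h3
    have h5 := hxp t₃ h3
    rw [hP]; simp only
    have : x t₃ ≤ 3 * a := by nlinarith
    linarith
  have hG : ∀ s ∈ Set.Icc t₄ t₂, -(A s * angF a x y θ s) ≤ 2.5 * a * (-B s) + 225 / R := by
    intro s hs
    have hs' := sub h4' m2 hs
    have hBs : 0 ≤ -B s := by linarith [antiB t₄ h4' s hs' hs.1]
    have hpa : a ≤ x s * y s := by nlinarith [hx2 s hs', hyx s hs', hxp s hs']
    have hpp : 0 < x s * y s := by linarith
    have hz1 : a / (x s * y s) ≤ 1 := by rw [div_le_one hpp]; exact hpa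
    have hz0 : 0 ≤ a / (x s * y s) := by positivity
    rw [hfe s hs']
    generalize a / (x s * y s) = z at hz1 hz0
    have hAs := hA1 s hs'
    have hAs2 := hA2 s
    have hDs := Dpos s hs'
    have hDs2 := L3 s hs'
    have hPs := hP3 s hs
    have hPp := Ppos s hs'
    have e1 : (A s * (P s * (-B s)) / 4) * (2 * z - 1) ≤ (A s * (P s * (-B s)) / 4) * 1 := by
      apply mul_le_mul_of_nonneg_left (by linarith)
      positivity
    have e2 : A s * (P s * (-B s)) ≤ (3 / 2) * (6 * a * (-B s)) := by gcongr
    have e3 : A s * (A s * D s) * (1 + 2 * z) ≤ (3 / 2) * ((3 / 2) * (132 / R)) * 3 := by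
      gcongr
      linarith
    have e4 : (3 / 2) * ((3 / 2) * (132 / R)) * 3 / 4 = 225 / R - 2.25 / R := by ring
    have e5 : 0 ≤ 2.25 / R := by positivity
    have e6 : 0 ≤ a * (-B s) := by positivity
    have e7 : -(A s * (-(P s * B s / 4) * (1 - 2 * z) - D s * A s / 4 * (1 + 2 * z))) =
        (A s * (P s * (-B s)) / 4) * (2 * z - 1) + A s * (A s * D s) * (1 + 2 * z) / 4 := by ring
    rw [e7]
    linarith
  have hfin := le_of_deriv_np (g := fun s => (-B s + 225 / R) * Real.exp (-(2.5 * a * s)))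
    (g' := fun s => (-(A s * angF a x y θ s)) * Real.exp (-(2.5 * a * s)) +
      (-B s + 225 / R) * (Real.exp (-(2.5 * a * s)) * (-(2.5 * a * 1)))) h4m.2
    (fun s hs => ((dB s (sub h4' m2 hs)).neg.add_const _).mul
      (((hasDerivAt_id s).const_mul (2.5 * a)).neg.exp)) (by
    intro s hs
    have h1 := hG s hs
    have h2 : 0 ≤ 225 / R := by positivity
    have h3 := Real.exp_pos (-(2.5 * a * s))
    have h5 : -(A s * angF a x y θ s) - 2.5 * a * (-B s + 225 / R) ≤ 0 := by
      have := mul_le_mul_of_nonneg_right ha h2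
      linarith
    have h6 := mul_nonpos_of_nonpos_of_nonneg h5 h3.le
    linarith)
  simp only [B2] at hfin
  have ht : t₂ - t₄ ≤ 6 * a := by
    have e4 := le_add_of_deriv_le (C := -1) h4m.2 (fun v hv => dP v (sub h4' m2 hv))
      (fun v hv => by linarith [hA1 v (sub h4' m2 hv)])
    have := hP3 t₄ ⟨le_rfl, h4m.2⟩
    have := Ppos t₂ m2
    linarith
  have hexp : Real.exp (-(2.5 * a * t₄)) ≤ Real.exp (-(2.5 * a * t₂)) * Real.exp (20 * a ^ 2) := by
    rw [← Real.exp_add, Real.exp_le_exp]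
    have h1 : 2.5 * a * (t₂ - t₄) ≤ 2.5 * a * (6 * a) := by gcongr
    have h2 := sq_nonneg a
    linarith
  have h225 : 0 ≤ 225 / R := by positivity
  have hE := Real.exp_pos (-(2.5 * a * t₂))
  have e1 : (-B t₄ + 225 / R) * Real.exp (-(2.5 * a * t₄)) ≤
      (300 / R + 225 / R) * (Real.exp (-(2.5 * a * t₂)) * Real.exp (20 * a ^ 2)) := by
    gcongr
  have e2 : (300 / R + 225 / R) * Real.exp (20 * a ^ 2) ≤ 0.525 := by
    rw [← add_div, div_mul_eq_mul_div, div_le_iff₀ hR0]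
    linarith
  have e3 : (300 / R + 225 / R) * (Real.exp (-(2.5 * a * t₂)) * Real.exp (20 * a ^ 2)) ≤
      0.525 * Real.exp (-(2.5 * a * t₂)) := by
    have := mul_le_mul_of_nonneg_right e2 hE.le
    linarith
  have e4 : 0 ≤ 225 / R * Real.exp (-(2.5 * a * t₂)) := by positivity
  linarith

set_option maxHeartbeats 2000000 in
/-- monotonicity lemma: there is `R₀ > 0` such that for every `R ≥ R₀`
the angle `θ_R` of the shooting solution is strictly decreasing (`θ_R'(t) < 0`, where
`θ_R'` is the right-hand side of the third equation) at every time `t` such that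
`θ_R > −5π/4` on `[0, t]` and `x_R > y_R` on `(0, t]`. -/
theorem monotonicity_of_angle (n : ℕ) (hn : 2 ≤ n) :
    ∃ R₀ > (0 : ℝ), ∀ R ≥ R₀, ∀ (T : ℝ) (x y θ : ℝ → ℝ),
      ShootingSol n R T x y θ →
      ∀ t ∈ Set.Ico 0 T,
        (∀ τ ∈ Set.Icc 0 t, -(5 * Real.pi / 4) < θ τ) →
        (∀ τ ∈ Set.Ioc 0 t, y τ < x τ) →
        (x t / 2 - ((n : ℝ) - 1) / x t) * Real.sin (θ t)
          + (((n : ℝ) - 1) / y t - y t / 2) * Real.cos (θ t) < 0 := by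
  have ha : (1 : ℝ) ≤ (n : ℝ) - 1 := by
    have : (2 : ℝ) ≤ n := by exact_mod_cast hn
    linarith
  generalize hadef : (n : ℝ) - 1 = a at ha
  refine ⟨1000 * (a + 1) + 1000 * Real.exp (20 * a ^ 2), by positivity, ?_⟩
  intro R hRR T x y θ hsol t ht hang hdiag
  obtain ⟨hT, hx0, hy0, hθ0, hS⟩ := hsol
  rw [hadef] at hS
  have hexp0 := Real.exp_pos (20 * a ^ 2)
  have hR : 1000 * (a + 1) ≤ R := by linarith
  have hR' : 1000 * Real.exp (20 * a ^ 2) ≤ R := by linarith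
  have hR0 : 0 < R := by linarith
  have h2 : Real.sqrt 2 * Real.sqrt 2 = 2 := Real.mul_self_sqrt (by norm_num)
  have h2p : 0 < Real.sqrt 2 := by positivity
  have hmem : ∀ s ∈ Set.Icc 0 t, s ∈ Set.Ico 0 T := fun s hs => ⟨hs.1, hs.2.trans_lt ht.2⟩
  have hxp : ∀ s ∈ Set.Icc 0 t, 0 < x s := fun s hs => (hS s (hmem s hs)).1
  have hyp : ∀ s ∈ Set.Icc 0 t, 0 < y s := fun s hs => (hS s (hmem s hs)).2.1
  have hx : ∀ s ∈ Set.Icc 0 t, HasDerivAt x (Real.cos (θ s)) s :=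
    fun s hs => (hS s (hmem s hs)).2.2.1
  have hy : ∀ s ∈ Set.Icc 0 t, HasDerivAt y (Real.sin (θ s)) s :=
    fun s hs => (hS s (hmem s hs)).2.2.2.1
  have hθ : ∀ s ∈ Set.Icc 0 t, HasDerivAt θ (angF a x y θ s) s :=
    fun s hs => (hS s (hmem s hs)).2.2.2.2
  have hdle : ∀ s ∈ Set.Icc 0 t, y s ≤ x s := by
    intro s hs
    rcases hs.1.eq_or_lt with h | h
    · rw [← h, hx0, hy0]
    · exact (hdiag s ⟨h, hs.2⟩).le
  have hdF : ∀ s ∈ Set.Icc 0 t, HasDerivAt (angF a x y θ)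
      (a * (1 / x s ^ 2 - 1 / y s ^ 2) * (Real.sin (θ s) * Real.cos (θ s)) +
        ((x s / 2 - a / x s) * Real.cos (θ s) - (a / y s - y s / 2) * Real.sin (θ s)) *
          angF a x y θ s) s := by
    intro s hs
    have h1 := hx s hs
    have h2 := hy s hs
    have h3 := hθ s hs
    have hxn := (hxp s hs).ne'
    have hyn := (hyp s hs).ne'
    have hc : HasDerivAt (fun _ : ℝ => a) 0 s := hasDerivAt_const s a
    have := (((h1.div_const 2).sub (hc.div h1 hxn)).mul h3.sin).add
      (((hc.div h2 hyn).sub (h2.div_const 2)).mul h3.cos)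
    refine HasDerivAt.congr_deriv (f := angF a x y θ) this ?_
    simp only [Pi.sub_apply, Pi.div_apply]
    generalize angF a x y θ s = F
    field_simp
    ring
  show angF a x y θ t < 0
  by_contra hcon
  push Not at hcon
  obtain ⟨b, ⟨hb, hFb⟩, hleast⟩ : ∃ b, IsLeast {s | s ∈ Set.Icc 0 t ∧ 0 ≤ angF a x y θ s} b := by
    apply IsCompact.exists_isLeast
    · have hcont : ContinuousOn (angF a x y θ) (Set.Icc 0 t) :=
        fun s hs => (hdF s hs).continuousAt.continuousWithinAt
      have := hcont.preimage_isClosed_of_isClosed isClosed_Icc (isClosed_Ici (a := (0 : ℝ)))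
      exact isCompact_Icc.of_isClosed_subset this (fun s hs => hs.1)
    · exact ⟨t, ⟨ht.1, le_rfl⟩, hcon⟩
  have hneg : ∀ s, 0 ≤ s → s < b → angF a x y θ s < 0 := by
    intro s hs hsb
    by_contra hc
    push Not at hc
    have := hleast ⟨⟨hs, hsb.le.trans hb.2⟩, hc⟩
    linarith
  have hsubb : ∀ s ∈ Set.Icc 0 b, s ∈ Set.Icc 0 t := fun s hs => ⟨hs.1, hs.2.trans hb.2⟩
  have hb0 : 0 < b := by
    rcases hb.1.eq_or_lt with h | h
    · exfalso
      have := (phase_one a R ha hR x y θ 0 le_rfl hx0 hy0 hθ0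
        (fun s hs => hx s ⟨hs.1, hs.2.trans ht.1⟩) (fun s hs => hy s ⟨hs.1, hs.2.trans ht.1⟩)
        (fun s hs => hθ s ⟨hs.1, hs.2.trans ht.1⟩) (fun s hs => by
          have : s = 0 := le_antisymm hs.2 hs.1
          rw [this, hθ0]; constructor <;> linarith [Real.pi_pos])).2
      rw [h] at this
      linarith
    · exact h
  have hev : ∀ᶠ s in nhdsWithin b (Set.Iio b), angF a x y θ s < 0 := by
    filter_upwards [Ioo_mem_nhdsLT hb0] with s hs
    exact hneg s hs.1.le hs.2
  have hF0 : angF a x y θ b = 0 := by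
    apply le_antisymm _ hFb
    exact le_of_tendsto ((hdF b hb).continuousAt.tendsto.mono_left nhdsWithin_le_nhds)
      (hev.mono fun s hs => hs.le)
  have hF' : 0 ≤ a * (1 / x b ^ 2 - 1 / y b ^ 2) * (Real.sin (θ b) * Real.cos (θ b)) := by
    have h1 := hdF b hb
    rw [hF0, mul_zero, add_zero] at h1
    have h3 := (hasDerivAt_iff_tendsto_slope.1 h1).mono_left
      (nhdsWithin_mono b (show Set.Iio b ⊆ {b}ᶜ from fun s hs => ne_of_lt hs))
    refine ge_of_tendsto h3 ?_
    filter_upwards [hev, self_mem_nhdsWithin] with s hs hsb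
    rw [slope_def_field, hF0]
    have : s < b := hsb
    exact div_nonneg_of_nonpos (by linarith) (by linarith)
  have hle : ∀ s ∈ Set.Icc 0 b, angF a x y θ s ≤ 0 := by
    intro s hs
    rcases hs.2.eq_or_lt with h | h
    · rw [h, hF0]
    · exact (hneg s hs.1 h).le
  have anti : ∀ u ∈ Set.Icc 0 b, ∀ v ∈ Set.Icc 0 b, u ≤ v → θ v ≤ θ u := by
    intro u hu v hv huv
    have hs' : ∀ s ∈ Set.Icc u v, s ∈ Set.Icc 0 b := fun s hs => ⟨hu.1.trans hs.1, hs.2.trans hv.2⟩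
    exact le_of_deriv_np huv (fun s hs => hθ s (hsubb s (hs' s hs))) (fun s hs => hle s (hs' s hs))
  have mb0 : (0 : ℝ) ∈ Set.Icc 0 b := ⟨le_rfl, hb0.le⟩
  have mbb : b ∈ Set.Icc 0 b := ⟨hb0.le, le_rfl⟩
  have ph1 : ∀ c ∈ Set.Icc 0 b, -(Real.pi / 2) ≤ θ c → c ≤ 7 / R ∧ angF a x y θ c < 0 := by
    intro c hc hθc
    have hs' : ∀ s ∈ Set.Icc 0 c, s ∈ Set.Icc 0 b := fun s hs => ⟨hs.1, hs.2.trans hc.2⟩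
    refine phase_one a R ha hR x y θ c hc.1 hx0 hy0 hθ0
      (fun s hs => hx s (hsubb s (hs' s hs))) (fun s hs => hy s (hsubb s (hs' s hs)))
      (fun s hs => hθ s (hsubb s (hs' s hs))) (fun s hs => ⟨?_, ?_⟩)
    · exact hθc.trans (anti s (hs' s hs) c hc hs.2)
    · rw [← hθ0]; exact anti 0 mb0 s (hs' s hs) hs.1
  have hbA : θ b < -(Real.pi / 2) := by
    by_contra hc
    push Not at hc
    linarith [(ph1 b mbb hc).2]
  have hxb := hxp b hb
  have hyb := hyp b hb
  have hdb := hdiag b ⟨hb0, hb.2⟩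
  have hbB : θ b ≤ -Real.pi := by
    by_contra hc
    push Not at hc
    have hcos : Real.cos (θ b) < 0 := by
      rw [← Real.cos_neg]
      apply Real.cos_neg_of_pi_div_two_lt_of_lt <;> linarith [Real.pi_pos]
    have hsin : Real.sin (θ b) < 0 := by
      apply Real.sin_neg_of_neg_of_neg_pi_lt <;> linarith [Real.pi_pos]
    have h1 : 1 / x b ^ 2 - 1 / y b ^ 2 < 0 := by
      have : 1 / x b ^ 2 < 1 / y b ^ 2 := by gcongr
      linarith
    have h3 : a * (1 / x b ^ 2 - 1 / y b ^ 2) < 0 := mul_neg_of_pos_of_neg (by linarith) h1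
    have := mul_neg_of_neg_of_pos h3 (mul_pos_of_neg_of_neg hsin hcos)
    linarith
  have hcθ : ∀ s ∈ Set.Icc 0 b, ContinuousAt θ s := fun s hs => (hθ s (hsubb s hs)).continuousAt
  obtain ⟨t₀, ht0, hθt0⟩ := exists_eq_of_le (v := -(Real.pi / 2)) hb0.le hcθ
    (by rw [hθ0]; linarith [Real.pi_pos]) hbA.le
  obtain ⟨t₂, ht2, hθt2⟩ := exists_eq_of_le (v := -Real.pi) ht0.2
    (fun s hs => hcθ s ⟨ht0.1.trans hs.1, hs.2⟩) (by rw [hθt0]; linarith [Real.pi_pos]) hbB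
  have ht0s := (ph1 t₀ ht0 hθt0.ge).1
  have hs0 : ∀ s ∈ Set.Icc 0 t₀, s ∈ Set.Icc 0 t := fun s hs => hsubb s ⟨hs.1, hs.2.trans ht0.2⟩
  have hxu := le_add_of_deriv_le (C := 1) ht0.1 (fun s hs => hx s (hs0 s hs))
    (fun s hs => Real.cos_le_one _)
  have hxl := ge_add_of_le_deriv (C := -1) ht0.1 (fun s hs => hx s (hs0 s hs))
    (fun s hs => Real.neg_one_le_cos _)
  have hyl := ge_add_of_le_deriv (C := -1) ht0.1 (fun s hs => hy s (hs0 s hs))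
    (fun s hs => Real.neg_one_le_sin _)
  rw [hx0] at hxu hxl
  rw [hy0] at hyl
  have h2u : Real.sqrt 2 ≤ 1.42 := by nlinarith
  have h2l : 1.41 ≤ Real.sqrt 2 := by nlinarith
  have hR2 : R / Real.sqrt 2 = R * Real.sqrt 2 / 2 := by
    field_simp; nlinarith
  have hR2l : 0.705 * R ≤ R / Real.sqrt 2 := by rw [hR2]; nlinarith
  have hR2u : R / Real.sqrt 2 ≤ 0.71 * R := by rw [hR2]; nlinarith
  have h7 : 7 / R ≤ 1 := by rw [div_le_one hR0]; linarith
  have h14 : 14 / R = 7 / R + 7 / R := by ring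
  have hs2 : ∀ s ∈ Set.Icc t₀ t₂, s ∈ Set.Icc 0 b :=
    fun s hs => ⟨ht0.1.trans hs.1, hs.2.trans ht2.2⟩
  have hx2 := phase_two a R ha hR hR' x y θ t₀ t₂ ht2.1 (by linarith) (by linarith) (by linarith)
    hθt0 hθt2 (fun s hs => hxp s (hsubb s (hs2 s hs))) (fun s hs => hyp s (hsubb s (hs2 s hs)))
    (fun s hs => hdle s (hsubb s (hs2 s hs))) (fun s hs => hle s (hs2 s hs))
    (fun s hs => hx s (hsubb s (hs2 s hs))) (fun s hs => hy s (hsubb s (hs2 s hs)))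
    (fun s hs => hθ s (hsubb s (hs2 s hs)))
  have ht2b : t₂ ∈ Set.Icc 0 b := ⟨ht0.1.trans ht2.1, ht2.2⟩
  have hθ3 : ∀ s ∈ Set.Icc t₂ b, Real.cos (θ s) < 0 ∧ 0 ≤ Real.sin (θ s) := by
    intro s hs
    have hsb : s ∈ Set.Icc 0 b := ⟨ht2b.1.trans hs.1, hs.2⟩
    have h1 := anti t₂ ht2b s hsb hs.1
    have h3 := hang s (hsubb s hsb)
    rw [hθt2] at h1
    constructor
    · rw [← Real.cos_neg]
      apply Real.cos_neg_of_pi_div_two_lt_of_lt <;> linarith [Real.pi_pos]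
    · rw [← Real.sin_add_two_pi]
      apply Real.sin_nonneg_of_nonneg_of_le_pi <;> linarith [Real.pi_pos]
  have hxb2 : x b ≤ x t₂ := le_of_deriv_np ht2.2
    (fun s hs => hx s (hsubb s ⟨ht2b.1.trans hs.1, hs.2⟩)) (fun s hs => (hθ3 s hs).1.le)
  obtain ⟨hcb, hsb⟩ := hθ3 b ⟨ht2.2, le_rfl⟩
  have hxx : x b ^ 2 < 2 * a := by nlinarith
  have hyy : y b ^ 2 < 2 * a := by nlinarith
  have g1 : x b / 2 - a / x b ≤ 0 := by
    rw [sub_nonpos, le_div_iff₀ hxb]; nlinarith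
  have g2 : 0 < a / y b - y b / 2 := by
    rw [sub_pos, lt_div_iff₀ hyb]; nlinarith
  have g3 := mul_nonpos_of_nonpos_of_nonneg g1 hsb
  have g4 := mul_neg_of_pos_of_neg g2 hcb
  unfold angF at hF0
  linarith
end

section
/- Let n ≥ 2 be an integer. For every compact interval K ⊂ (0, ∞) and every ε > 0 there exists R₀ > 0 such that for every R ≥ R₀ and every t ∈ (0, T_R) for which x_R(τ) > y_R(τ) for all τ ∈ (0, t] and θ_R(τ) > −5π/4 for all τ ∈ [0, t], the following holds: if (x_R(t) + y_R(t))/√2 ∈ K, then (x_R(t) − y_R(t))/√2 < ε and |θ_R(t) + 3π/4| < ε. (As R → ∞, the curves converge in C¹ to the diagonal {x = y} on compact subsets away from the origin.) -/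
lemma mono_aux (f f' : ℝ → ℝ) (a b : ℝ) (hab : a ≤ b)
    (hd : ∀ x ∈ Set.Icc a b, HasDerivAt f (f' x) x)
    (hp : ∀ x ∈ Set.Ioo a b, 0 ≤ f' x) : f a ≤ f b := by
  have hm : MonotoneOn f (Set.Icc a b) := by
    apply monotoneOn_of_deriv_nonneg (convex_Icc a b)
    · exact fun x hx => (hd x hx).continuousAt.continuousWithinAt
    · intro x hx
      rw [interior_Icc] at hx
      exact (hd x (Set.Ioo_subset_Icc_self hx)).differentiableAt.differentiableWithinAt
    · intro x hx
      rw [interior_Icc] at hx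
      rw [(hd x (Set.Ioo_subset_Icc_self hx)).deriv]
      exact hp x hx
  exact hm ⟨le_rfl, hab⟩ ⟨hab, le_rfl⟩ hab

lemma barrier_aux (f f' : ℝ → ℝ) (a b : ℝ)
    (hd : ∀ x ∈ Set.Icc a b, HasDerivAt f (f' x) x) (ha : f a ≤ 0)
    (hp : ∀ x ∈ Set.Ico a b, f x = 0 → f' x < 0) : ∀ x ∈ Set.Icc a b, f x ≤ 0 := by
  intro x hx
  exact image_le_of_deriv_right_lt_deriv_boundary (f := f) (f' := f') (B := fun _ => 0)
    (B' := fun _ => 0)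
    (fun x hx => (hd x hx).continuousAt.continuousWithinAt)
    (fun x hx => (hd x (Set.Ico_subset_Icc_self hx)).hasDerivWithinAt) ha
    (fun x => hasDerivAt_const x 0) hp hx

/-- right-hand side of the angle equation in rotated coordinates -/
noncomputable def bd (m r s b : ℝ) : ℝ :=
  -(r / 2 - 2 * m * r / (r ^ 2 - s ^ 2)) * Real.sin b
    - (1 / 2 + 2 * m / (r ^ 2 - s ^ 2)) * s * Real.cos b

/-- the system in rotated coordinates -/
def Rot (m : ℝ) (r s b : ℝ → ℝ) (a c : ℝ) : Prop :=
  ∀ t ∈ Set.Icc a c, HasDerivAt r (-Real.cos (b t)) t ∧ HasDerivAt s (Real.sin (b t)) t ∧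
    HasDerivAt b (bd m (r t) (s t) (b t)) t

lemma Rot.mono {m : ℝ} {r s b : ℝ → ℝ} {a c a' c' : ℝ} (h : Rot m r s b a c) (h1 : a ≤ a')
    (h2 : c' ≤ c) : Rot m r s b a' c' := fun t ht => h t ⟨h1.trans ht.1, ht.2.trans h2⟩

set_option maxHeartbeats 2000000 in
lemma phase1 (m R t k : ℝ) (hm : 1 ≤ m) (hR : 1000 + 8 * m ≤ R) (hk : 2 * k < R) (ht : 0 ≤ t)
    (r s b : ℝ → ℝ) (h : Rot m r s b 0 t) (hr0 : r 0 = R) (hs0 : s 0 = 0)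
    (hb0 : b 0 = Real.pi / 2) (hs : ∀ τ ∈ Set.Ioc 0 t, 0 < s τ) (hrt : r t ≤ k) :
    ∃ t1 ∈ Set.Icc 0 t, 0 < t1 ∧ b t1 = 0 ∧ R / 2 ≤ r t1 ∧ s t1 ≤ 4 * Real.pi / R := by
  have hpi := Real.pi_gt_three
  have hpi4 := Real.pi_lt_d2
  have hRpos : 0 < R := by linarith
  have hs' : ∀ τ ∈ Set.Icc 0 t, 0 ≤ s τ := by
    intro τ hτ
    rcases hτ.1.eq_or_lt with h0 | h0
    · rw [← h0, hs0]
    · exact (hs τ ⟨h0, hτ.2⟩).le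
  have cr : ContinuousOn r (Set.Icc 0 t) := fun x hx => (h x hx).1.continuousAt.continuousWithinAt
  have cs : ContinuousOn s (Set.Icc 0 t) := fun x hx => (h x hx).2.1.continuousAt.continuousWithinAt
  have cb : ContinuousOn b (Set.Icc 0 t) := fun x hx => (h x hx).2.2.continuousAt.continuousWithinAt
  let F : ℝ → ℝ := fun x => min (min (b x) (r x - R / 2)) (min (1 - s x) (2 - b x))
  have cF : ContinuousOn F (Set.Icc 0 t) := by
    exact (cb.inf (cr.sub continuousOn_const)).inf
      ((continuousOn_const.sub cs).inf (continuousOn_const.sub cb))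
  have hcl : IsCompact (Set.Icc 0 t ∩ F ⁻¹' Set.Iic 0) :=
    isCompact_Icc.of_isClosed_subset (cF.preimage_isClosed_of_isClosed isClosed_Icc isClosed_Iic)
      Set.inter_subset_left
  obtain ⟨t1, ⟨ht1, hF1⟩, hleast⟩ := hcl.exists_isLeast ⟨t, ⟨ht, le_rfl⟩, by
    simp only [Set.mem_preimage, Set.mem_Iic, F]
    exact (min_le_left _ _).trans ((min_le_right _ _).trans (by linarith))⟩
  have hlt : ∀ τ ∈ Set.Ico 0 t1, 0 < b τ ∧ R / 2 < r τ ∧ s τ < 1 ∧ b τ < 2 := by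
    intro τ hτ
    have : 0 < F τ := by
      by_contra hc
      have := hleast ⟨⟨hτ.1, hτ.2.le.trans ht1.2⟩, not_lt.mp hc⟩
      linarith [hτ.2]
    simp only [F, lt_min_iff] at this
    obtain ⟨⟨h1, h2⟩, h3, h4⟩ := this
    exact ⟨h1, by linarith, by linarith, by linarith⟩
  have ht1pos : 0 < t1 := by
    rcases ht1.1.eq_or_lt with h0 | h0
    · exfalso
      rw [← h0] at hF1
      simp only [Set.mem_preimage, Set.mem_Iic, F, hr0, hs0, hb0] at hF1
      have : 0 < min (min (Real.pi / 2) (R - R / 2)) (min (1 - 0) (2 - Real.pi / 2)) := by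
        simp only [lt_min_iff]
        refine ⟨⟨?_, ?_⟩, ?_, ?_⟩ <;> linarith
      linarith
    · exact h0
  have h1 : Rot m r s b 0 t1 := h.mono le_rfl ht1.2
  -- closure
  have hne : Set.Icc 0 t1 = closure (Set.Ico 0 t1) := (closure_Ico ht1pos.ne).symm
  have hD : ∀ τ ∈ Set.Ico 0 t1, 8 * m ≤ r τ ^ 2 - s τ ^ 2 := by
    intro τ hτ
    obtain ⟨_, h2, h3, _⟩ := hlt τ hτ
    have h4 := hs' τ ⟨hτ.1, hτ.2.le.trans ht1.2⟩
    nlinarith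
  have hg : ∀ τ ∈ Set.Ico 0 t1, R / 8 ≤ r τ / 2 - 2 * m * r τ / (r τ ^ 2 - s τ ^ 2) ∧
      r τ / 2 - 2 * m * r τ / (r τ ^ 2 - s τ ^ 2) ≤ r τ / 2 := by
    intro τ hτ
    obtain ⟨_, h2, h3, _⟩ := hlt τ hτ
    have hd := hD τ hτ
    have e1 : 2 * m * r τ / (r τ ^ 2 - s τ ^ 2) ≤ r τ / 4 := by
      rw [div_le_iff₀ (by linarith)]
      nlinarith
    have e2 : 0 ≤ 2 * m * r τ / (r τ ^ 2 - s τ ^ 2) := by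
      apply div_nonneg <;> nlinarith
    constructor <;> linarith
  have hh : ∀ τ ∈ Set.Ico 0 t1, 1 / 2 ≤ 1 / 2 + 2 * m / (r τ ^ 2 - s τ ^ 2) ∧
      1 / 2 + 2 * m / (r τ ^ 2 - s τ ^ 2) ≤ 3 / 4 := by
    intro τ hτ
    have hd := hD τ hτ
    have e1 : 2 * m / (r τ ^ 2 - s τ ^ 2) ≤ 1 / 4 := by
      rw [div_le_iff₀ (by linarith)]
      linarith
    have e2 : 0 ≤ 2 * m / (r τ ^ 2 - s τ ^ 2) := by
      apply div_nonneg <;> linarith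
    constructor <;> linarith
  have hbpi : ∀ τ ∈ Set.Icc 0 t1, b τ ≤ Real.pi / 2 := by
    intro τ hτ
    have := barrier_aux (fun x => b x - Real.pi / 2) (fun x => bd m (r x) (s x) (b x)) 0 t1
      (fun x hx => (h1 x hx).2.2.sub_const _) (by simp [hb0]) (by
        intro x hx hx0
        have hx0' : b x = Real.pi / 2 := by linarith
        simp only [bd, hx0', Real.sin_pi_div_two, Real.cos_pi_div_two]
        have := (hg x hx).1
        linarith) τ hτ
    linarith
  have hb0' : ∀ τ ∈ Set.Ico 0 t1, 0 ≤ Real.sin (b τ) ∧ 0 ≤ Real.cos (b τ) := by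
    intro τ hτ
    have e1 := (hlt τ hτ).1
    have e2 := hbpi τ ⟨hτ.1, hτ.2.le⟩
    exact ⟨Real.sin_nonneg_of_nonneg_of_le_pi e1.le (by linarith),
      Real.cos_nonneg_of_neg_pi_div_two_le_of_le (by linarith) e2⟩
  have hIoo : ∀ {a c x : ℝ}, 0 ≤ a → c ≤ t1 → x ∈ Set.Ioo a c → x ∈ Set.Ico 0 t1 :=
    fun ha hc hx => ⟨ha.trans hx.1.le, hx.2.trans_le hc⟩
  -- s bound
  have hsb : ∀ τ ∈ Set.Icc 0 t1, b τ + R / 8 * s τ ≤ Real.pi / 2 := by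
    intro τ hτ
    have := mono_aux (fun x => - (b x + R / 8 * s x))
      (fun x => -(bd m (r x) (s x) (b x) + R / 8 * Real.sin (b x))) 0 τ hτ.1
      (fun x hx => ((h1 x ⟨hx.1, hx.2.trans hτ.2⟩).2.2.add
        ((h1 x ⟨hx.1, hx.2.trans hτ.2⟩).2.1.const_mul _)).neg) (by
        intro x hx
        have hx' := hIoo le_rfl hτ.2 hx
        obtain ⟨e1, e2⟩ := hb0' x hx'
        have e3 := (hg x hx').1
        have e4 := (hh x hx').1
        have e5 := hs' x ⟨hx'.1, hx'.2.le.trans ht1.2⟩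
        have e6 := mul_le_mul_of_nonneg_right e3 e1
        have e7 : 0 ≤ (1 / 2 + 2 * m / (r x ^ 2 - s x ^ 2)) * s x * Real.cos (b x) :=
          mul_nonneg (mul_nonneg (by linarith) e5) e2
        simp only [bd]
        linarith)
    simp only [hb0, hs0] at this
    linarith
  have hrge : R / 2 ≤ r t1 := by
    have : Set.Icc 0 t1 ⊆ Set.Icc 0 t1 ∩ r ⁻¹' (Set.Ici (R / 2)) := by
      have hc : IsClosed (Set.Icc 0 t1 ∩ r ⁻¹' (Set.Ici (R / 2))) :=
        (cr.mono (Set.Icc_subset_Icc le_rfl ht1.2)).preimage_isClosed_of_isClosed isClosed_Icc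
          isClosed_Ici
      conv_lhs => rw [hne]
      exact closure_minimal (fun x hx => ⟨Set.Ico_subset_Icc_self hx, (hlt x hx).2.1.le⟩) hc
    exact (this ⟨ht1.1, le_rfl⟩).2
  have hbge : 0 ≤ b t1 := by
    have : Set.Icc 0 t1 ⊆ Set.Icc 0 t1 ∩ b ⁻¹' (Set.Ici 0) := by
      have hc : IsClosed (Set.Icc 0 t1 ∩ b ⁻¹' (Set.Ici 0)) :=
        (cb.mono (Set.Icc_subset_Icc le_rfl ht1.2)).preimage_isClosed_of_isClosed isClosed_Icc
          isClosed_Ici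
      conv_lhs => rw [hne]
      exact closure_minimal (fun x hx => ⟨Set.Ico_subset_Icc_self hx, (hlt x hx).1.le⟩) hc
    exact (this ⟨ht1.1, le_rfl⟩).2
  have hst1 : ∀ τ ∈ Set.Icc 0 t1, 0 ≤ b τ → s τ ≤ 4 * Real.pi / R := by
    intro τ hτ hb
    have := hsb τ hτ
    rw [le_div_iff₀ hRpos]
    linarith
  have hS : 4 * Real.pi / R < 1 := by
    rw [div_lt_one hRpos]; linarith
  refine ⟨t1, ht1, ht1pos, ?_, hrge, hst1 t1 ⟨ht1.1, le_rfl⟩ hbge⟩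
  by_contra hbne
  have hbpos : 0 < b t1 := lt_of_le_of_ne hbge (Ne.symm hbne)
  have hrt1 : r t1 ≤ R / 2 := by
    by_contra hc
    have h3 := hst1 t1 ⟨ht1.1, le_rfl⟩ hbge
    have h4 := hbpi t1 ⟨ht1.1, le_rfl⟩
    have : 0 < F t1 := by
      simp only [F, lt_min_iff]
      refine ⟨⟨hbpos, ?_⟩, ?_, ?_⟩ <;> linarith
    simp only [Set.mem_preimage, Set.mem_Iic] at hF1
    linarith
  -- find ta
  obtain ⟨ta, hta, hrta⟩ : ∃ ta ∈ Set.Icc 0 t1, r ta = 3 * R / 4 := by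
    have := intermediate_value_Icc' ht1.1 (cr.mono (Set.Icc_subset_Icc le_rfl ht1.2))
    exact this ⟨by linarith, by rw [hr0]; linarith⟩
  have htalt : ta < t1 := by
    rcases hta.2.eq_or_lt with h0 | h0
    · rw [h0] at hrta; linarith
    · exact h0
  have htaIco : ta ∈ Set.Ico 0 t1 := ⟨hta.1, htalt⟩
  have htage : R / 4 ≤ ta := by
    have := mono_aux (fun x => r x + x) (fun x => -Real.cos (b x) + 1) 0 ta hta.1
      (fun x hx => ((h1 x ⟨hx.1, hx.2.trans hta.2⟩).1).add (hasDerivAt_id x)) (by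
        intro x hx
        have := Real.cos_le_one (b x)
        linarith)
    simp only [hr0, hrta] at this
    linarith
  have hbanti : ∀ τ ∈ Set.Icc 0 ta, b ta ≤ b τ := by
    intro τ hτ
    have := mono_aux (fun x => - (b x)) (fun x => -(bd m (r x) (s x) (b x))) τ ta hτ.2
      (fun x hx => (h1 x ⟨hτ.1.trans hx.1, hx.2.trans hta.2⟩).2.2.neg) (by
        intro x hx
        have hx' := hIoo hτ.1 hta.2 hx
        obtain ⟨e1, e2⟩ := hb0' x hx'
        have e3 := (hg x hx').1
        have e4 := (hh x hx').1
        have e5 := hs' x ⟨hx'.1, hx'.2.le.trans ht1.2⟩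
        have e6 := mul_le_mul_of_nonneg_right e3 e1
        have e7 : 0 ≤ (1 / 2 + 2 * m / (r x ^ 2 - s x ^ 2)) * s x * Real.cos (b x) :=
          mul_nonneg (mul_nonneg (by linarith) e5) e2
        have e8 : 0 ≤ R / 8 * Real.sin (b x) := by positivity
        simp only [bd]
        linarith)
    linarith
  have hbta := hlt ta htaIco
  have hbtapi := hbpi ta hta
  have hsin : Real.sin (b ta) * ta ≤ s ta := by
    have := mono_aux (fun x => s x - Real.sin (b ta) * x)
      (fun x => Real.sin (b x) - Real.sin (b ta) * 1) 0 ta hta.1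
      (fun x hx => (h1 x ⟨hx.1, hx.2.trans hta.2⟩).2.1.sub ((hasDerivAt_id x).const_mul _)) (by
        intro x hx
        have e1 := hbanti x ⟨hx.1.le, hx.2.le⟩
        have e2 := hbpi x ⟨hx.1.le, hx.2.le.trans hta.2⟩
        have := Real.sin_le_sin_of_le_of_le_pi_div_two (by linarith) e2 e1
        linarith)
    simp only [hs0] at this
    linarith
  have hsta := hst1 ta hta hbta.1.le
  have hjord := Real.mul_le_sin hbta.1.le hbtapi
  have hbsmall : b ta ≤ 1 / 20 := by
    rw [le_div_iff₀ hRpos] at hsta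
    have e0 := (hb0' ta htaIco).1
    have e1 : Real.sin (b ta) * (R / 4) ≤ s ta :=
      (mul_le_mul_of_nonneg_left htage e0).trans hsin
    have e2 : Real.sin (b ta) * (R / 4) * R ≤ 4 * Real.pi :=
      (mul_le_mul_of_nonneg_right e1 hRpos.le).trans hsta
    have e3 : 2 / Real.pi * b ta ≥ 1 / 2 * b ta := by
      apply mul_le_mul_of_nonneg_right _ hbta.1.le
      rw [div_le_div_iff₀ (by norm_num) (by linarith)]; linarith
    have e4 : 1000 * 1000 ≤ R * R := by nlinarith
    have e5 : 0 ≤ Real.sin (b ta) * (R * R - 1000 * 1000) := mul_nonneg e0 (by linarith)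
    nlinarith
  have hlow : Real.pi / 2 ≤ b ta + R / 2 * s ta + 3 / 4 * (s ta * (R - r ta)) := by
    have := mono_aux (fun x => b x + R / 2 * s x + 3 / 4 * (s x * (R - r x)))
      (fun x => bd m (r x) (s x) (b x) + R / 2 * Real.sin (b x) +
        3 / 4 * (Real.sin (b x) * (R - r x) + s x * (- -Real.cos (b x)))) 0 ta hta.1
      (fun x hx => by
        obtain ⟨d1, d2, d3⟩ := h1 x ⟨hx.1, hx.2.trans hta.2⟩
        exact (d3.add (d2.const_mul _)).add ((d2.mul (d1.const_sub R)).const_mul _)) (by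
        intro x hx
        have hx' := hIoo le_rfl hta.2 hx
        obtain ⟨e1, e2⟩ := hb0' x hx'
        have e3 := (hg x hx').2
        have e4 := (hh x hx').2
        have e5 := hs' x ⟨hx'.1, hx'.2.le.trans ht1.2⟩
        have er : r x ≤ R := by
          have := mono_aux (fun x => - (r x)) (fun x => - -Real.cos (b x)) 0 x hx'.1
            (fun z hz => (h1 z ⟨hz.1, hz.2.trans hx'.2.le⟩).1.neg) (by
              intro z hz
              have := (hb0' z (hIoo le_rfl hx'.2.le hz)).2
              linarith)
          linarith
        have e6 := mul_le_mul_of_nonneg_right (e3.trans (by linarith : r x / 2 ≤ R / 2)) e1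
        have e7 := mul_le_mul_of_nonneg_right e4 (mul_nonneg e5 e2)
        have e8 : 0 ≤ Real.sin (b x) * (R - r x) := mul_nonneg e1 (by linarith)
        simp only [bd]
        linarith)
    simp only [hs0, hb0] at this
    linarith
  have hfin : b t1 ≤ b ta - s ta / 2 * (r ta - r t1) := by
    have := mono_aux (fun x => - (b x - s ta / 2 * r x))
      (fun x => -(bd m (r x) (s x) (b x) - s ta / 2 * (-Real.cos (b x)))) ta t1 hta.2
      (fun x hx => by
        obtain ⟨d1, d2, d3⟩ := h1 x ⟨hta.1.trans hx.1, hx.2⟩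
        exact (d3.sub (d1.const_mul _)).neg) (by
        intro x hx
        have hx' := hIoo hta.1 le_rfl hx
        obtain ⟨e1, e2⟩ := hb0' x hx'
        have e3 := (hg x hx').1
        have e4 := (hh x hx').1
        have e5 : s ta ≤ s x := mono_aux s (fun x => Real.sin (b x)) ta x hx.1.le
          (fun z hz => (h1 z ⟨hta.1.trans hz.1, hz.2.trans hx.2.le⟩).2.1) (fun z hz =>
            (hb0' z (hIoo hta.1 hx.2.le hz)).1)
        have e6 := mul_le_mul_of_nonneg_right e3 e1
        have e50 := hs' x ⟨hx'.1, hx'.2.le.trans ht1.2⟩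
        have e7 : s ta / 2 * Real.cos (b x) ≤
            (1 / 2 + 2 * m / (r x ^ 2 - s x ^ 2)) * s x * Real.cos (b x) := by
          apply mul_le_mul_of_nonneg_right _ e2
          have := mul_le_mul_of_nonneg_right e4 e50
          linarith
        have e8 : 0 ≤ R / 8 * Real.sin (b x) := by positivity
        simp only [bd]
        linarith)
    linarith
  rw [hrta] at hlow hfin
  have e1 : 1 ≤ s ta * R := by linarith
  have e2 : 0 ≤ s ta := hs' ta ⟨hta.1, hta.2.trans ht1.2⟩
  have e3 : 0 ≤ s ta * (R / 2 - r t1) := mul_nonneg e2 (by linarith)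
  linarith

noncomputable def cN (m : ℝ) : ℝ := 1 / 2 + 1600 * m
noncomputable def cB (m : ℝ) : ℝ := cN m + 1
noncomputable def cL (m : ℝ) : ℝ := 80 * m + 1
noncomputable def cA (m : ℝ) : ℝ :=
  Real.exp (cL m * (8 * m + 2)) * (80 * m * cB m + cN m + 1)

set_option maxHeartbeats 1000000 in
lemma claimA (m S a c : ℝ) (hm : 1 ≤ m) (hS : 0 < S) (hS' : S ≤ 1 / 40)
    (r s b : ℝ → ℝ) (h : Rot m r s b a c) (hba : b a = 0)
    (hb : ∀ τ ∈ Set.Icc a c, -(Real.pi / 2) < b τ ∧ b τ ≤ 0)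
    (hs : ∀ τ ∈ Set.Icc a c, 0 ≤ s τ ∧ s τ ≤ S)
    (hr : ∀ τ ∈ Set.Icc a c, 1 / 20 ≤ r τ) :
    ∀ τ ∈ Set.Icc a c, -Real.sin (b τ) ≤ S * (cB m + cA m) := by
  have hN : 0 < cN m := by unfold cN; linarith
  have hB : 0 < cB m := by unfold cB; linarith
  have hL : 0 < cL m := by unfold cL; linarith
  have hA : 0 < cA m := by unfold cA; positivity
  intro τ hτ
  have key := barrier_aux (fun x => -Real.sin (b x) - S * (cB m + cA m * Real.exp (-(cL m * r x))))
    (fun x => -(Real.cos (b x) * bd m (r x) (s x) (b x)) -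
      S * (cA m * (Real.exp (-(cL m * r x)) * (-(cL m * -Real.cos (b x)))))) a c
    (fun x hx => by
      obtain ⟨d1, d2, d3⟩ := h x hx
      exact (d3.sin.neg).sub (((((d1.const_mul _).neg.exp).const_mul _).const_add _).const_mul _))
    (by
      simp only [hba, Real.sin_zero]
      have : 0 < S * (cB m + cA m * Real.exp (-(cL m * r a))) := by positivity
      linarith)
    (by
      intro x hx hx0
      have hx := Set.Ico_subset_Icc_self hx
      obtain ⟨hb1, hb2⟩ := hb x hx
      obtain ⟨hs1, hs2⟩ := hs x hx
      have hr1 := hr x hx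
      have hcos : 0 < Real.cos (b x) :=
        Real.cos_pos_of_mem_Ioo ⟨hb1, by linarith [Real.pi_pos]⟩
      have hcos1 := Real.cos_le_one (b x)
      have hsin : -Real.sin (b x) = S * (cB m + cA m * Real.exp (-(cL m * r x))) := by linarith
      set E := Real.exp (-(cL m * r x)) with hE
      have hEpos : 0 < E := Real.exp_pos _
      have hD : r x ^ 2 / 2 ≤ r x ^ 2 - s x ^ 2 := by nlinarith
      have hr2 : 1 / 800 ≤ r x ^ 2 / 2 := by nlinarith
      have hDpos : 0 < r x ^ 2 - s x ^ 2 := by linarith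
      have hh : 1 / 2 + 2 * m / (r x ^ 2 - s x ^ 2) ≤ cN m := by
        unfold cN
        have : 2 * m / (r x ^ 2 - s x ^ 2) ≤ 1600 * m := by
          rw [div_le_iff₀ hDpos]; nlinarith
        linarith
      have hh0 : 0 ≤ 1 / 2 + 2 * m / (r x ^ 2 - s x ^ 2) := by positivity
      have hg : 2 * m * r x / (r x ^ 2 - s x ^ 2) ≤ 4 * m / r x := by
        rw [div_le_div_iff₀ hDpos (by linarith)]
        nlinarith
      have hmain : (r x / 2 - 2 * m * r x / (r x ^ 2 - s x ^ 2)) * (cB m + cA m * E)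
          + cA m * E * cL m > cN m := by
        have hAE : 0 < cA m * E := by positivity
        by_cases hc : 8 * m + 2 ≤ r x
        · have e1 : 4 * m / r x ≤ 1 / 2 := by
            rw [div_le_iff₀ (by linarith)]; linarith
          have e2 : 1 ≤ r x / 2 - 2 * m * r x / (r x ^ 2 - s x ^ 2) := by linarith
          have e3 := mul_le_mul_of_nonneg_right e2 (by positivity : 0 ≤ cB m + cA m * E)
          have e4 : 0 < cA m * E * cL m := by positivity
          have e5 : cB m = cN m + 1 := rfl
          linarith
        · have e1 : 4 * m / r x ≤ 80 * m := by
            rw [div_le_iff₀ (by linarith)]; nlinarith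
          have e2 : -(80 * m) ≤ r x / 2 - 2 * m * r x / (r x ^ 2 - s x ^ 2) := by linarith
          have e3 := mul_le_mul_of_nonneg_right e2 (by positivity : 0 ≤ cB m + cA m * E)
          have e4 : cL m = 80 * m + 1 := rfl
          have e5 : 80 * m * cB m + cN m + 1 ≤ cA m * E := by
            have : cA m * E = (80 * m * cB m + cN m + 1) *
                Real.exp (cL m * (8 * m + 2) + -(cL m * r x)) := by
              rw [Real.exp_add]; unfold cA; ring
            rw [this]
            have h1 : 1 ≤ Real.exp (cL m * (8 * m + 2) + -(cL m * r x)) := by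
              apply Real.one_le_exp
              nlinarith
            have h2 : 0 ≤ 80 * m * cB m + cN m + 1 := by positivity
            nlinarith
          have e6 : cA m * E * cL m = 80 * m * (cA m * E) + cA m * E := by rw [e4]; ring
          linarith
      have hpos := mul_pos hcos (mul_pos hS (sub_pos.mpr hmain))
      have e8 : (1 / 2 + 2 * m / (r x ^ 2 - s x ^ 2)) * s x * Real.cos (b x) ≤ cN m * S := by
        have u1 : (1 / 2 + 2 * m / (r x ^ 2 - s x ^ 2)) * s x ≤ cN m * S :=
          mul_le_mul hh hs2 hs1 hN.le
        have u2 : 0 ≤ (1 / 2 + 2 * m / (r x ^ 2 - s x ^ 2)) * s x := mul_nonneg hh0 hs1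
        nlinarith
      have e9 := mul_le_mul_of_nonneg_left e8 hcos.le
      have e10 : Real.sin (b x) = -(S * (cB m + cA m * E)) := by linarith
      simp only [bd, e10]
      linarith) τ hτ
  have hE1 : Real.exp (-(cL m * r τ)) ≤ 1 := by
    rw [Real.exp_le_one_iff]
    have := hr τ hτ
    nlinarith
  have : S * (cB m + cA m * Real.exp (-(cL m * r τ))) ≤ S * (cB m + cA m) := by
    apply mul_le_mul_of_nonneg_left _ hS.le
    nlinarith
  linarith

set_option maxHeartbeats 1000000 in
lemma claimB (m S a c : ℝ) (hac : a ≤ c) (hm : 1 ≤ m) (hS : 0 < S) (hS' : S ≤ 1 / 40)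
    (hSC : S * (cB m + cA m) ≤ 1 / 2)
    (r s b : ℝ → ℝ) (h : Rot m r s b a c) (hba : b a = 0)
    (hb : ∀ τ ∈ Set.Icc a c, -(Real.pi / 2) < b τ ∧ b τ ≤ 0)
    (hs : ∀ τ ∈ Set.Icc a c, 0 < s τ ∧ s τ ≤ S)
    (hr : ∀ τ ∈ Set.Icc a c, 1 / 20 ≤ r τ) (hra : 2 ≤ r a) (hrc : r c = 1 / 20) : False := by
  have hA := claimA m S a c hm hS hS' r s b h hba hb (fun τ hτ => ⟨(hs τ hτ).1.le, (hs τ hτ).2⟩) hr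
  have hcos : ∀ τ ∈ Set.Icc a c, 1 / 2 ≤ Real.cos (b τ) := by
    intro τ hτ
    have h1 := hA τ hτ
    have h2 := Real.sin_sq_add_cos_sq (b τ)
    have h3 : 0 < Real.cos (b τ) :=
      Real.cos_pos_of_mem_Ioo ⟨(hb τ hτ).1, by linarith [Real.pi_pos, (hb τ hτ).2]⟩
    have h4 : Real.sin (b τ) ≤ 0 :=
      Real.sin_nonpos_of_nonpos_of_neg_pi_le (hb τ hτ).2 (by linarith [Real.pi_pos, (hb τ hτ).1])
    nlinarith
  have hsin : ∀ τ ∈ Set.Icc a c, Real.sin (b τ) ≤ 0 := fun τ hτ =>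
      Real.sin_nonpos_of_nonpos_of_neg_pi_le (hb τ hτ).2 (by linarith [Real.pi_pos, (hb τ hτ).1])
  have cr : ContinuousOn r (Set.Icc a c) := fun x hx => (h x hx).1.continuousAt.continuousWithinAt
  have ranti : ∀ u ∈ Set.Icc a c, ∀ v ∈ Set.Icc a c, u ≤ v → r v ≤ r u := by
    intro u hu v hv huv
    have := mono_aux (fun x => - (r x)) (fun x => - -Real.cos (b x)) u v huv
      (fun z hz => (h z ⟨hu.1.trans hz.1, hz.2.trans hv.2⟩).1.neg) (by
        intro z hz
        have := hcos z ⟨hu.1.trans hz.1.le, hz.2.le.trans hv.2⟩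
        linarith)
    linarith
  have santi : ∀ u ∈ Set.Icc a c, ∀ v ∈ Set.Icc a c, u ≤ v → s v ≤ s u := by
    intro u hu v hv huv
    have := mono_aux (fun x => - (s x)) (fun x => -Real.sin (b x)) u v huv
      (fun z hz => (h z ⟨hu.1.trans hz.1, hz.2.trans hv.2⟩).2.1.neg) (by
        intro z hz
        have := hsin z ⟨hu.1.trans hz.1.le, hz.2.le.trans hv.2⟩
        linarith)
    linarith
  obtain ⟨τ1, hτ1, hr1⟩ : ∃ τ ∈ Set.Icc a c, r τ = 1 :=
    intermediate_value_Icc' hac cr ⟨by rw [hrc]; norm_num, by linarith⟩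
  obtain ⟨τ2, hτ2, hr2⟩ : ∃ τ ∈ Set.Icc a τ1, r τ = 2 :=
    intermediate_value_Icc' hτ1.1 (cr.mono (Set.Icc_subset_Icc le_rfl hτ1.2))
      ⟨by rw [hr1]; norm_num, hra⟩
  have hτ2' : τ2 ∈ Set.Icc a c := ⟨hτ2.1, hτ2.2.trans hτ1.2⟩
  let w : ℝ → ℝ := fun x => Real.exp (2 * m * Real.log (r x) - r x ^ 2 / 4)
  let q : ℝ → ℝ := fun x => -(w x * Real.sin (b x))
  let q' : ℝ → ℝ := fun x => w x * Real.cos (b x) *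
    ((2 * m / r x - 2 * m * r x / (r x ^ 2 - s x ^ 2)) * Real.sin (b x) +
      (1 / 2 + 2 * m / (r x ^ 2 - s x ^ 2)) * s x * Real.cos (b x))
  have hq : ∀ x ∈ Set.Icc a c, HasDerivAt q (q' x) x := by
    intro x hx
    obtain ⟨d1, d2, d3⟩ := h x hx
    have hrx : r x ≠ 0 := by have := hr x hx; linarith
    have e1 : HasDerivAt w (w x * (2 * m * (-Real.cos (b x) / r x) -
        (2 * r x * (-Real.cos (b x))) / 4)) x := by
      have := (((d1.log hrx).const_mul (2 * m)).sub ((d1.pow 2).div_const 4)).exp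
      refine HasDerivAt.congr_deriv (f := w) this ?_
      change w x * _ = _
      norm_num
    have hD : r x ^ 2 - s x ^ 2 ≠ 0 := by
      have h1 := hr x hx
      obtain ⟨hs1, hs2⟩ := hs x hx
      nlinarith
    refine HasDerivAt.congr_deriv (f := q) (e1.mul d3.sin).neg ?_
    simp only [q', bd]
    field_simp
    ring
  have hq0 : ∀ x ∈ Set.Icc a c, w x * s x / 4 * Real.cos (b x) ≤ q' x := by
    intro x hx
    have hrx := hr x hx
    obtain ⟨hs1, hs2⟩ := hs x hx
    have hDpos : 0 < r x ^ 2 - s x ^ 2 := by nlinarith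
    have e1 : 2 * m / r x - 2 * m * r x / (r x ^ 2 - s x ^ 2) ≤ 0 := by
      rw [sub_nonpos, div_le_div_iff₀ (by linarith) hDpos]
      nlinarith [mul_pos (by linarith : 0 < m) (mul_pos hs1 hs1)]
    have e2 := mul_nonneg_of_nonpos_of_nonpos e1 (hsin x hx)
    have hc := hcos x hx
    have e3 : 0 ≤ 2 * m / (r x ^ 2 - s x ^ 2) := by positivity
    have e4 : s x / 4 ≤ (1 / 2 + 2 * m / (r x ^ 2 - s x ^ 2)) * s x * Real.cos (b x) := by
      have : s x / 2 ≤ (1 / 2 + 2 * m / (r x ^ 2 - s x ^ 2)) * s x := by nlinarith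
      nlinarith
    have hw : 0 < w x := Real.exp_pos _
    have hc0 : 0 < Real.cos (b x) := by linarith
    have e6 := mul_le_mul_of_nonneg_left (by linarith : s x / 4 ≤
      (2 * m / r x - 2 * m * r x / (r x ^ 2 - s x ^ 2)) * Real.sin (b x) +
      (1 / 2 + 2 * m / (r x ^ 2 - s x ^ 2)) * s x * Real.cos (b x)) (by positivity : 0 ≤ w x * Real.cos (b x))
    simp only [q']
    linarith
  set σ := s τ1 with hσ
  have hσpos : 0 < σ := (hs τ1 hτ1).1
  have hexp1 : 1 / 3 ≤ Real.exp (-1) := by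
    rw [Real.exp_neg, one_div]
    apply inv_anti₀ (Real.exp_pos _)
    linarith [Real.exp_one_lt_d9]
  have hq1 : σ / 12 ≤ q τ1 := by
    have := mono_aux (fun x => q x + σ / 12 * r x) (fun x => q' x + σ / 12 * (-Real.cos (b x)))
      τ2 τ1 hτ2.2 (fun x hx => by
        have hx' : x ∈ Set.Icc a c := ⟨hτ2.1.trans hx.1, hx.2.trans hτ1.2⟩
        exact (hq x hx').add ((h x hx').1.const_mul _)) (by
        intro x hx
        have hx' : x ∈ Set.Icc a c := ⟨hτ2.1.trans hx.1.le, hx.2.le.trans hτ1.2⟩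
        have e1 := hq0 x hx'
        have e2 := santi x hx' τ1 hτ1 hx.2.le
        have e3 := ranti x hx' τ1 hτ1 hx.2.le
        have e4 := ranti τ2 hτ2' x hx' hx.1.le
        rw [hr1] at e3
        rw [hr2] at e4
        have hw : 1 / 3 ≤ w x := by
          refine hexp1.trans (Real.exp_le_exp.mpr ?_)
          have := Real.log_nonneg e3
          nlinarith [mul_nonneg (by linarith : 0 ≤ m) this]
        have e5 : 1 / 3 * σ ≤ w x * s x := mul_le_mul hw e2 hσpos.le (by linarith)
        have e6 := mul_le_mul_of_nonneg_right e5 (by linarith [hcos x hx'] : 0 ≤ Real.cos (b x))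
        linarith)
    have hq2 : 0 ≤ q τ2 := by
      have e1 := hsin τ2 hτ2'
      have hw : 0 < w τ2 := Real.exp_pos _
      simp only [q]
      nlinarith
    simp only [hr1, hr2] at this
    linarith
  have hfin := mono_aux (fun x => -(s x + σ / 12 * (r x)⁻¹))
    (fun x => -(Real.sin (b x) + σ / 12 * (- -Real.cos (b x) / r x ^ 2))) τ1 c hτ1.2
    (fun x hx => by
      have hx' : x ∈ Set.Icc a c := ⟨hτ1.1.trans hx.1, hx.2⟩
      have hrx : r x ≠ 0 := by have := hr x hx'; linarith
      exact ((h x hx').2.1.add (((h x hx').1.fun_inv hrx).const_mul _)).neg) (by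
    intro x hx
    have hx' : x ∈ Set.Icc a c := ⟨hτ1.1.trans hx.1.le, hx.2.le⟩
    have hqx : q τ1 ≤ q x := mono_aux q q' τ1 x hx.1.le
      (fun z hz => hq z ⟨hτ1.1.trans hz.1, hz.2.trans hx'.2⟩) (fun z hz => by
        have hz' : z ∈ Set.Icc a c := ⟨hτ1.1.trans hz.1.le, hz.2.le.trans hx'.2⟩
        have e1 := hq0 z hz'
        have e2 := (hs z hz').1
        have hw : 0 < w z := Real.exp_pos _
        have e3 := hcos z hz'
        have e4 : 0 < Real.cos (b z) := by linarith
        have : 0 < w z * s z / 4 * Real.cos (b z) := by positivity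
        linarith)
    have hrx := hr x hx'
    have hrx1 := ranti τ1 hτ1 x hx' hx.1.le
    rw [hr1] at hrx1
    have hw : w x ≤ r x ^ 2 := by
      have e1 : r x ^ 2 = Real.exp (2 * Real.log (r x)) := by
        rw [two_mul, Real.exp_add, Real.exp_log (by linarith)]; ring
      rw [e1]
      apply Real.exp_le_exp.mpr
      have := Real.log_nonpos (by linarith) hrx1
      nlinarith [sq_nonneg (r x)]
    have e1 := hsin x hx'
    have e2 : σ / 12 ≤ r x ^ 2 * (-Real.sin (b x)) := by
      have : w x * (-Real.sin (b x)) ≤ r x ^ 2 * (-Real.sin (b x)) :=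
        mul_le_mul_of_nonneg_right hw (by linarith)
      have e3 : q x = w x * (-Real.sin (b x)) := by simp only [q]; ring
      linarith
    have hr2pos : 0 < r x ^ 2 := by nlinarith
    have e4 : σ / 12 * (- -Real.cos (b x) / r x ^ 2) ≤ -Real.sin (b x) := by
      rw [neg_neg, ← mul_div_assoc, div_le_iff₀ hr2pos]
      have := Real.cos_le_one (b x)
      nlinarith
    linarith)
  have hsc := (hs c ⟨hac, le_rfl⟩).1
  simp only [hrc, hr1] at hfin
  norm_num at hfin
  linarith

set_option maxHeartbeats 1000000 in
lemma rot_main (m R t k : ℝ) (hm : 1 ≤ m) (hR : 1000 + 8 * m ≤ R) (hk : 2 * k < R) (ht : 0 ≤ t)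
    (hSC : 4 * Real.pi / R * (cB m + cA m) ≤ 1 / 2)
    (r s b : ℝ → ℝ) (h : Rot m r s b 0 t) (hr0 : r 0 = R) (hs0 : s 0 = 0)
    (hb0 : b 0 = Real.pi / 2) (hs : ∀ τ ∈ Set.Ioc 0 t, 0 < s τ) (hrt : r t ≤ k)
    (hsr : ∀ τ ∈ Set.Icc 0 t, s τ < r τ)
    (hb : ∀ τ ∈ Set.Icc 0 t, -(Real.pi / 2) < b τ) :
    s t ≤ 4 * Real.pi / R ∧ |b t| ≤ 2 * (4 * Real.pi / R * (cB m + cA m)) := by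
  have hpi := Real.pi_gt_three
  have hpi4 := Real.pi_lt_d2
  have hRpos : 0 < R := by linarith
  obtain ⟨t1, ht1, ht1pos, hbt1, hrt1, hst1⟩ :=
    phase1 m R t k hm hR hk ht r s b h hr0 hs0 hb0 hs hrt
  set S := 4 * Real.pi / R with hS
  have hSpos : 0 < S := by positivity
  have hS40 : S ≤ 1 / 40 := by
    rw [hS, div_le_div_iff₀ hRpos (by norm_num)]; linarith
  have h2 : Rot m r s b t1 t := h.mono ht1.1 le_rfl
  have hI : ∀ x ∈ Set.Icc t1 t, x ∈ Set.Icc 0 t := fun x hx => ⟨ht1.1.trans hx.1, hx.2⟩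
  have hspos : ∀ x ∈ Set.Icc t1 t, 0 < s x := fun x hx => hs x ⟨ht1pos.trans_le hx.1, hx.2⟩
  have hble : ∀ x ∈ Set.Icc t1 t, b x ≤ 0 := by
    apply barrier_aux b (fun x => bd m (r x) (s x) (b x)) t1 t (fun x hx => (h2 x hx).2.2) hbt1.le
    intro x hx hx0
    have hx := Set.Ico_subset_Icc_self hx
    have e1 := hspos x hx
    have e2 := hsr x (hI x hx)
    have hD : 0 < r x ^ 2 - s x ^ 2 := by nlinarith
    have : 0 < (1 / 2 + 2 * m / (r x ^ 2 - s x ^ 2)) * s x := by positivity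
    simp only [bd, hx0, Real.sin_zero, Real.cos_zero]
    linarith
  have hsin : ∀ τ ∈ Set.Icc t1 t, Real.sin (b τ) ≤ 0 := fun τ hτ =>
    Real.sin_nonpos_of_nonpos_of_neg_pi_le (hble τ hτ) (by linarith [hb τ (hI τ hτ)])
  have hcos : ∀ τ ∈ Set.Icc t1 t, 0 ≤ Real.cos (b τ) := fun τ hτ =>
    Real.cos_nonneg_of_neg_pi_div_two_le_of_le (hb τ (hI τ hτ)).le (by linarith [hble τ hτ])
  have ranti : ∀ u ∈ Set.Icc t1 t, ∀ v ∈ Set.Icc t1 t, u ≤ v → r v ≤ r u := by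
    intro u hu v hv huv
    have := mono_aux (fun x => - (r x)) (fun x => - -Real.cos (b x)) u v huv
      (fun z hz => (h2 z ⟨hu.1.trans hz.1, hz.2.trans hv.2⟩).1.neg) (by
        intro z hz
        have := hcos z ⟨hu.1.trans hz.1.le, hz.2.le.trans hv.2⟩
        linarith)
    linarith
  have sle : ∀ v ∈ Set.Icc t1 t, s v ≤ S := by
    intro v hv
    have := mono_aux (fun x => - (s x)) (fun x => -Real.sin (b x)) t1 v hv.1
      (fun z hz => (h2 z ⟨hz.1, hz.2.trans hv.2⟩).2.1.neg) (by
        intro z hz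
        have := hsin z ⟨hz.1.le, hz.2.le.trans hv.2⟩
        linarith)
    linarith
  have ht1t : t ∈ Set.Icc t1 t := ⟨ht1.2, le_rfl⟩
  have ht1t1 : t1 ∈ Set.Icc t1 t := ⟨le_rfl, ht1.2⟩
  have cr : ContinuousOn r (Set.Icc t1 t) := fun x hx => (h2 x hx).1.continuousAt.continuousWithinAt
  have hrt20 : 1 / 20 ≤ r t := by
    by_contra hc
    obtain ⟨c, hc1, hc2⟩ : ∃ c ∈ Set.Icc t1 t, r c = 1 / 20 :=
      intermediate_value_Icc' ht1.2 cr ⟨by linarith, by linarith⟩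
    have hJ : ∀ x ∈ Set.Icc t1 c, x ∈ Set.Icc t1 t := fun x hx => ⟨hx.1, hx.2.trans hc1.2⟩
    exact claimB m S t1 c hc1.1 hm hSpos hS40 hSC r s b (h2.mono le_rfl hc1.2) hbt1
      (fun τ hτ => ⟨hb τ (hI τ (hJ τ hτ)), hble τ (hJ τ hτ)⟩)
      (fun τ hτ => ⟨hspos τ (hJ τ hτ), sle τ (hJ τ hτ)⟩)
      (fun τ hτ => by rw [← hc2]; exact ranti τ (hJ τ hτ) c hc1 hτ.2) (by linarith) hc2
  have hA := claimA m S t1 t hm hSpos hS40 r s b h2 hbt1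
      (fun τ hτ => ⟨hb τ (hI τ hτ), hble τ hτ⟩)
      (fun τ hτ => ⟨(hspos τ hτ).le, sle τ hτ⟩)
      (fun τ hτ => hrt20.trans (ranti τ hτ t ht1t hτ.2)) t ht1t
  refine ⟨sle t ht1t, ?_⟩
  have e1 := hble t ht1t
  have e2 := hb t (hI t ht1t)
  rw [abs_of_nonpos e1]
  have hj := Real.mul_le_sin (x := -b t) (by linarith) (by linarith)
  rw [Real.sin_neg] at hj
  have e3 : 2 / Real.pi * (-b t) ≥ 1 / 2 * (-b t) := by
    apply mul_le_mul_of_nonneg_right _ (by linarith)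
    rw [div_le_div_iff₀ (by norm_num) (by linarith)]; linarith
  linarith

lemma trig_aux (a : ℝ) :
    Real.cos a = (Real.sin (a + 3 * Real.pi / 4) - Real.cos (a + 3 * Real.pi / 4)) / Real.sqrt 2 ∧
    Real.sin a = -(Real.sin (a + 3 * Real.pi / 4) + Real.cos (a + 3 * Real.pi / 4)) / Real.sqrt 2 := by
  have h2 : Real.sqrt 2 * Real.sqrt 2 = 2 := Real.mul_self_sqrt (by norm_num)
  have h3 : 0 < Real.sqrt 2 := by positivity
  have e : a + 3 * Real.pi / 4 = Real.pi + (a - Real.pi / 4) := by ring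
  rw [e, add_comm Real.pi, Real.sin_add_pi, Real.cos_add_pi, Real.sin_sub, Real.cos_sub,
    Real.cos_pi_div_four, Real.sin_pi_div_four]
  constructor <;> field_simp <;> ring

lemma rot_of_shoot (n : ℕ) (R T t : ℝ) (x y θ : ℝ → ℝ) (h : ShootingSol n R T x y θ)
    (ht : t < T) :
    Rot ((n : ℝ) - 1) (fun τ => (x τ + y τ) / Real.sqrt 2) (fun τ => (x τ - y τ) / Real.sqrt 2)
      (fun τ => θ τ + 3 * Real.pi / 4) 0 t := by
  intro τ hτ
  obtain ⟨-, -, -, -, hsys⟩ := h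
  obtain ⟨hx, hy, d1, d2, d3⟩ := hsys τ ⟨hτ.1, hτ.2.trans_lt ht⟩
  obtain ⟨c1, c2⟩ := trig_aux (θ τ)
  have h2 : Real.sqrt 2 * Real.sqrt 2 = 2 := Real.mul_self_sqrt (by norm_num)
  have h2' : Real.sqrt 2 ^ 2 = 2 := Real.sq_sqrt (by norm_num)
  have h3 : 0 < Real.sqrt 2 := by positivity
  refine ⟨?_, ?_, ?_⟩
  · refine ((d1.add d2).div_const (Real.sqrt 2)).congr_deriv ?_
    rw [c1, c2]
    field_simp
    rw [h2']; ring
  · refine ((d1.sub d2).div_const (Real.sqrt 2)).congr_deriv ?_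
    rw [c1, c2]
    field_simp
    rw [h2']; ring
  · refine (d3.add_const (3 * Real.pi / 4)).congr_deriv ?_
    have hD : ((x τ + y τ) / Real.sqrt 2) ^ 2 - ((x τ - y τ) / Real.sqrt 2) ^ 2 = 2 * (x τ * y τ) := by
      rw [div_pow, div_pow, h2']; ring
    simp only [bd]
    rw [hD, c1, c2]
    field_simp
    ring

set_option maxHeartbeats 1000000 in
theorem c1_convergence_to_diagonal (n : ℕ) (hn : 2 ≤ n) :
    ∀ k₁ k₂ : ℝ, 0 < k₁ → k₁ ≤ k₂ → ∀ ε > (0 : ℝ),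
      ∃ R₀ > (0 : ℝ), ∀ R ≥ R₀, ∀ (T : ℝ) (x y θ : ℝ → ℝ),
        ShootingSol n R T x y θ →
        ∀ t ∈ Set.Ioo 0 T,
          (∀ τ ∈ Set.Ioc 0 t, y τ < x τ) →
          (∀ τ ∈ Set.Icc 0 t, -(5 * Real.pi / 4) < θ τ) →
          (x t + y t) / Real.sqrt 2 ∈ Set.Icc k₁ k₂ →
          (x t - y t) / Real.sqrt 2 < ε ∧ |θ t + 3 * Real.pi / 4| < ε := by
  intro k₁ k₂ hk1 hk2 ε hε
  have hn' : (2 : ℝ) ≤ n := by exact_mod_cast hn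
  set m : ℝ := (n : ℝ) - 1 with hmdef
  have hm : 1 ≤ m := by linarith
  set C := cB m + cA m with hC
  have hC1 : 1 ≤ C := by
    have h1 : 1 ≤ cB m := by unfold cB cN; linarith
    have h2 : 0 ≤ cA m := by unfold cA cB cN; positivity
    linarith
  have hpi := Real.pi_gt_three
  have hp : 0 < 4 * Real.pi * C := by positivity
  refine ⟨1000 + 8 * m + 2 * k₂ + 4 * Real.pi * C * (2 + 4 / ε), ?_, ?_⟩
  · have : 0 < 4 * Real.pi * C * (2 + 4 / ε) := by positivity
    linarith
  intro R hR T x y θ hsol t ht hxy hθ hmem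
  have hq : 0 < 4 * Real.pi * C * (4 / ε) := by positivity
  have hRpos : 0 < R := by linarith
  have hS1 : 4 * Real.pi / R * C ≤ 1 / 2 := by
    rw [div_mul_eq_mul_div, div_le_div_iff₀ hRpos (by norm_num)]
    linarith
  have hS2 : 4 * Real.pi / R * C ≤ ε / 4 := by
    rw [div_mul_eq_mul_div, div_le_div_iff₀ hRpos (by norm_num)]
    have : 4 * Real.pi * C * (4 / ε) * ε = 4 * Real.pi * C * 4 := by field_simp
    nlinarith
  have hpos : ∀ τ ∈ Set.Icc 0 t, 0 < x τ ∧ 0 < y τ := fun τ hτ =>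
    ⟨(hsol.2.2.2.2 τ ⟨hτ.1, hτ.2.trans_lt ht.2⟩).1, (hsol.2.2.2.2 τ ⟨hτ.1, hτ.2.trans_lt ht.2⟩).2.1⟩
  have hrot := rot_of_shoot n R T t x y θ hsol ht.2
  have h3 : 0 < Real.sqrt 2 := by positivity
  have h2' : Real.sqrt 2 ^ 2 = 2 := Real.sq_sqrt (by norm_num)
  obtain ⟨-, hx0, hy0, hθ0, -⟩ := hsol
  have hmain := rot_main m R t k₂ hm (by linarith) (by linarith) ht.1.le hS1 _ _ _ hrot
    (by simp only [hx0, hy0]; field_simp; rw [h2']; ring)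
    (by simp only [hx0, hy0]; simp)
    (by simp only [hθ0]; ring)
    (fun τ hτ => div_pos (by linarith [hxy τ hτ]) h3) hmem.2
    (fun τ hτ => by
      have := (hpos τ hτ).2
      exact div_lt_div_of_pos_right (by linarith) h3)
    (fun τ hτ => by linarith [hθ τ hτ])
  obtain ⟨e1, e2⟩ := hmain
  have hSp : 0 < 4 * Real.pi / R := by positivity
  constructor
  · have : 4 * Real.pi / R ≤ 4 * Real.pi / R * C := le_mul_of_one_le_right hSp.le hC1
    linarith
  · linarith
end

section
/- Let m, n ≥ 2 be integers and let γ(t) = (x(t), y(t)) be a nonconstant T-periodic unit-speed solution of the self-shrinker profile equation with x(t) > 0, y(t) > 0 for all t, which is injective on [0, T) (an embedded closed geodesic). Then γ intersects the cone line √(m−1)·y = √(n−1)·x at least twice: there exist t₁ ≠ t₂ in [0, T) with √(m−1)·y(t_i) = √(n−1)·x(t_i) for i = 1, 2. -/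
/-- A unit-speed curve `γ = (x, y)` with `x, y > 0` is a solution of the self-shrinker
profile equation for `O(m) × O(n)`-invariant self-shrinkers in `ℝ^{m+n}` on the set `S`. -/
def IsProfileSol (m n : ℕ) (x y : ℝ → ℝ) (S : Set ℝ) : Prop :=
  ∀ t ∈ S, 0 < x t ∧ 0 < y t ∧
    DifferentiableAt ℝ x t ∧ DifferentiableAt ℝ (deriv x) t ∧
    DifferentiableAt ℝ y t ∧ DifferentiableAt ℝ (deriv y) t ∧
    (deriv x t) ^ 2 + (deriv y t) ^ 2 = 1 ∧
    -(deriv (deriv x) t) * deriv y t + deriv x t * deriv (deriv y) t =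
      (x t * deriv y t - deriv x t * y t) / 2
        + ((n : ℝ) - 1) * deriv x t / y t - ((m : ℝ) - 1) * deriv y t / x t

theorem aux_gronwall (E E' : ℝ → ℝ) (t0 t1 L : ℝ) (hE : ∀ t, HasDerivAt E (E' t) t)
    (h0 : E t0 = 0) (hpos : ∀ t, 0 ≤ E t) (hL : ∀ t ∈ Set.Icc t0 t1, E' t ≤ L * E t) :
    ∀ t ∈ Set.Icc t0 t1, E t = 0 := by
  have hd : ∀ t, HasDerivAt (fun t => E t * Real.exp (-L * t))
      (E' t * Real.exp (-L * t) + E t * (Real.exp (-L * t) * (-L * 1))) t := fun t =>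
    (hE t).mul (((hasDerivAt_id t).const_mul (-L)).exp)
  have hanti : AntitoneOn (fun t => E t * Real.exp (-L * t)) (Set.Icc t0 t1) := by
    apply antitoneOn_of_deriv_nonpos (convex_Icc _ _)
    · exact fun t _ => (hd t).continuousAt.continuousWithinAt
    · exact fun t _ => (hd t).differentiableAt.differentiableWithinAt
    · intro t ht
      rw [interior_Icc] at ht
      rw [(hd t).deriv]
      have := hL t ⟨ht.1.le, ht.2.le⟩
      have he := Real.exp_pos (-L * t)
      nlinarith
  intro t ht
  have h := hanti ⟨le_refl _, ht.1.trans ht.2⟩ ht ht.1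
  simp only [h0, zero_mul] at h
  have he := Real.exp_pos (-L * t)
  have h2 := hpos t
  by_contra hne
  have : 0 < E t := lt_of_le_of_ne h2 (Ne.symm hne)
  have := mul_pos this he
  linarith

theorem aux_pos (m n : ℕ) (hm : 2 ≤ m)
    (hn : 2 ≤ n) (T : ℝ) (hT : 0 < T) (x y : ℝ → ℝ)
    (hperx : ∀ t, x (t + T) = x t) (hpery : ∀ t, y (t + T) = y t)
    (hsol : IsProfileSol m n x y Set.univ) :
    ∃ t, 0 < Real.sqrt ((m : ℝ) - 1) * y t - Real.sqrt ((n : ℝ) - 1) * x t := by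
  have hm' : (0 : ℝ) < (m : ℝ) - 1 := by
    have : (2 : ℝ) ≤ m := by exact_mod_cast hm
    linarith
  have hn' : (0 : ℝ) < (n : ℝ) - 1 := by
    have : (2 : ℝ) ≤ n := by exact_mod_cast hn
    linarith
  have hc2 : Real.sqrt ((m : ℝ) - 1) ^ 2 = (m : ℝ) - 1 := Real.sq_sqrt hm'.le
  have hd2 : Real.sqrt ((n : ℝ) - 1) ^ 2 = (n : ℝ) - 1 := Real.sq_sqrt hn'.le
  have hc : 0 < Real.sqrt ((m : ℝ) - 1) := Real.sqrt_pos.2 hm'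
  have hd : 0 < Real.sqrt ((n : ℝ) - 1) := Real.sqrt_pos.2 hn'
  generalize Real.sqrt ((m : ℝ) - 1) = c at *
  generalize Real.sqrt ((n : ℝ) - 1) = d at *
  have hx : ∀ t, 0 < x t := fun t => (hsol t trivial).1
  have hy : ∀ t, 0 < y t := fun t => (hsol t trivial).2.1
  have hdx : ∀ t, HasDerivAt x (deriv x t) t := fun t => (hsol t trivial).2.2.1.hasDerivAt
  have hddx : ∀ t, HasDerivAt (deriv x) (deriv (deriv x) t) t :=
    fun t => (hsol t trivial).2.2.2.1.hasDerivAt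
  have hdy : ∀ t, HasDerivAt y (deriv y t) t := fun t => (hsol t trivial).2.2.2.2.1.hasDerivAt
  have hddy : ∀ t, HasDerivAt (deriv y) (deriv (deriv y) t) t :=
    fun t => (hsol t trivial).2.2.2.2.2.1.hasDerivAt
  have hu : ∀ t, deriv x t ^ 2 + deriv y t ^ 2 = 1 := fun t => (hsol t trivial).2.2.2.2.2.2.1
  have hK := fun t => (hsol t trivial).2.2.2.2.2.2.2
  rw [← hc2, ← hd2] at hK
  clear hsol
  generalize deriv x = x1 at *
  generalize deriv y = y1 at *
  generalize deriv x1 = x2 at *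
  generalize deriv y1 = y2 at *
  have horth : ∀ t, x1 t * x2 t + y1 t * y2 t = 0 := by
    intro t
    have h1 : HasDerivAt (fun t => x1 t ^ 2 + y1 t ^ 2) _ t := ((hddx t).pow 2).add ((hddy t).pow 2)
    have h2 : (fun t => x1 t ^ 2 + y1 t ^ 2) = fun _ => (1 : ℝ) := funext hu
    rw [h2] at h1
    have := h1.unique (hasDerivAt_const t (1 : ℝ))
    norm_num at this
    linarith
  have hx2 : ∀ t, x2 t = -(-(x2 t) * y1 t + x1 t * y2 t) * y1 t := by
    intro t; linear_combination (-x2 t) * hu t + x1 t * horth t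
  have hy2 : ∀ t, y2 t = (-(x2 t) * y1 t + x1 t * y2 t) * x1 t := by
    intro t; linear_combination (-y2 t) * hu t + y1 t * horth t
  have hcx : Continuous x := continuous_iff_continuousAt.2 fun t => (hdx t).continuousAt
  have hcy : Continuous y := continuous_iff_continuousAt.2 fun t => (hdy t).continuousAt
  have hcx1 : Continuous x1 := continuous_iff_continuousAt.2 fun t => (hddx t).continuousAt
  have hcy1 : Continuous y1 := continuous_iff_continuousAt.2 fun t => (hddy t).continuousAt
  -- maximum of q
  have hq : ∀ t, HasDerivAt (fun t => y t / x t) ((y1 t * x t - y t * x1 t) / x t ^ 2) t :=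
    fun t => (hdy t).div (hdx t) (hx t).ne'
  have hcq : Continuous (fun t => y t / x t) := hcy.div hcx fun t => (hx t).ne'
  have hpq : Function.Periodic (fun t => y t / x t) T := by
    intro t; simp only [hperx, hpery]
  obtain ⟨t1, -, hmax0⟩ := isCompact_Icc.exists_isMaxOn (Set.nonempty_Icc.2 hT.le)
    (hcq.continuousOn (s := Set.Icc 0 T))
  have hmax : ∀ t, y t / x t ≤ y t1 / x t1 := by
    intro t
    obtain ⟨s, hs, hts⟩ := hpq.exists_mem_Ico₀ hT t
    have := hmax0 ⟨hs.1, hs.2.le⟩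
    simp only [Set.mem_ofPred_eq] at this hts
    linarith
  have hlm : IsLocalMax (fun t => y t / x t) t1 := Filter.Eventually.of_forall hmax
  have hX := hx t1
  have hY := hy t1
  have hg0 : y1 t1 * x t1 = y t1 * x1 t1 := by
    have := hlm.hasDerivAt_eq_zero (hq t1)
    rw [div_eq_zero_iff] at this
    rcases this with h | h
    · linarith
    · exact absurd h (by positivity)
  have hx10 : x1 t1 ≠ 0 := by
    intro h
    have h1 := hu t1
    rw [h, mul_zero] at hg0
    have : y1 t1 = 0 := by
      rcases mul_eq_zero.1 hg0 with h | h
      · exact h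
      · exact absurd h hX.ne'
    rw [h, this] at h1
    norm_num at h1
  have hle : y2 t1 * x t1 - y t1 * x2 t1 ≤ 0 := by
    by_contra hpos
    push Not at hpos
    have hderiv : deriv (fun t => y t / x t) = fun t => (y1 t * x t - y t * x1 t) / x t ^ 2 :=
      funext fun t => (hq t).deriv
    have hdd : HasDerivAt (deriv (fun t => y t / x t))
        ((y2 t1 * x t1 - y t1 * x2 t1) / x t1 ^ 2) t1 := by
      rw [hderiv]
      have := (((hddy t1).mul (hdx t1)).sub ((hdy t1).mul (hddx t1))).div ((hdx t1).pow 2)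
        (pow_ne_zero 2 hX.ne')
      refine HasDerivAt.congr_deriv this ?_
      simp only [Pi.sub_apply, Pi.mul_apply, Pi.pow_apply, hg0]
      field_simp
      ring
    have hlmin : IsLocalMin (fun t => y t / x t) t1 := by
      apply isLocalMin_of_deriv_deriv_pos
      · rw [hdd.deriv]; positivity
      · exact hlm.deriv_eq_zero
      · exact hcq.continuousAt
    have hev : (fun t => y t / x t) =ᶠ[nhds t1] fun _ => y t1 / x t1 := by
      filter_upwards [hlmin] with t ht
      exact le_antisymm (hmax t) ht
    have h0 := hev.deriv.deriv_eq
    rw [hdd.deriv] at h0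
    simp at h0
    rcases h0 with h | h
    · linarith
    · exact hX.ne' h
  have hw0 : 0 ≤ c * y t1 - d * x t1 := by
    have hkey : y2 t1 * x t1 - y t1 * x2 t1 =
        x1 t1 ^ 2 * ((x t1 ^ 2 + y t1 ^ 2) / (x t1 ^ 3 * y t1)) *
          ((d * x t1) ^ 2 - (c * y t1) ^ 2) := by
      have e1 : y1 t1 = y t1 * x1 t1 / x t1 := by
        rw [eq_div_iff hX.ne']; exact hg0
      have h1 : y2 t1 * x t1 - y t1 * x2 t1 =
        (-(x2 t1) * y1 t1 + x1 t1 * y2 t1) * (x t1 * x1 t1 + y t1 * y1 t1) := by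
        linear_combination (x t1) * hy2 t1 - y t1 * hx2 t1
      rw [h1, hK t1, e1]
      field_simp
      ring
    rw [hkey] at hle
    have hp : 0 < x1 t1 ^ 2 * ((x t1 ^ 2 + y t1 ^ 2) / (x t1 ^ 3 * y t1)) := by positivity
    have h3 : (d * x t1) ^ 2 - (c * y t1) ^ 2 ≤ 0 := by
      by_contra h
      push Not at h
      have := mul_pos hp h
      linarith
    have := abs_le_of_sq_le_sq' (by linarith : (d * x t1) ^ 2 ≤ (c * y t1) ^ 2) (by positivity)
    linarith [this.2]
  rcases hw0.lt_or_eq with h | hw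
  · exact ⟨t1, h⟩
  exfalso
  have hw1 : c * y1 t1 - d * x1 t1 = 0 := by
    have : (c * y1 t1 - d * x1 t1) * x t1 = 0 := by
      linear_combination c * hg0 - x1 t1 * hw
    rcases mul_eq_zero.1 this with h | h
    · exact h
    · exact absurd h hX.ne'
  -- linear ODE
  set P : ℝ → ℝ := fun t => (c * x1 t + d * y1 t) * (-x1 t / (2 * c) - c * y1 t / (x t * y t))
    with hP
  set Q : ℝ → ℝ := fun t => (c * x1 t + d * y1 t) * (x t / (2 * c) - d / y t) with hQ
  have hlin : ∀ t, c * y2 t - d * x2 t =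
      P t * (c * y t - d * x t) + Q t * (c * y1 t - d * x1 t) := by
    intro t
    have h1 : c * y2 t - d * x2 t =
        (-(x2 t) * y1 t + x1 t * y2 t) * (c * x1 t + d * y1 t) := by
      linear_combination c * hy2 t - d * hx2 t
    have := (hx t).ne'
    have := (hy t).ne'
    rw [h1, hK t]
    simp only [hP, hQ]
    field_simp
    ring
  have hcP : Continuous P := by
    have : ∀ t, x t * y t ≠ 0 := fun t => (mul_pos (hx t) (hy t)).ne'
    simp only [hP]
    exact ((hcx1.const_mul c).add (hcy1.const_mul d)).mul
      ((hcx1.neg.div_const _).sub ((hcy1.const_mul c).div (hcx.mul hcy) this))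
  have hcQ : Continuous Q := by
    simp only [hQ]
    exact ((hcx1.const_mul c).add (hcy1.const_mul d)).mul
      ((hcx.div_const _).sub (continuous_const.div hcy fun t => (hy t).ne'))
  obtain ⟨L, hL⟩ := (isCompact_Icc (a := t1) (b := t1 + T)).exists_bound_of_continuousOn
    ((((continuous_const (y := (1:ℝ))).add hcP).abs.add (hcQ.abs.const_mul 2)).continuousOn)
  have hE := aux_gronwall (fun t => (c * y t - d * x t) ^ 2 + (c * y1 t - d * x1 t) ^ 2)
    (fun t => 2 * (c * y t - d * x t) * (c * y1 t - d * x1 t)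
      + 2 * (c * y1 t - d * x1 t) * (c * y2 t - d * x2 t)) t1 (t1 + T) L
    (by
      intro t
      have := ((((hdy t).const_mul c).sub ((hdx t).const_mul d)).pow 2).add
        ((((hddy t).const_mul c).sub ((hddx t).const_mul d)).pow 2)
      refine HasDerivAt.congr_deriv this ?_
      simp)  (by simp [← hw, hw1]) (fun t => by positivity)
    (by
      intro t ht
      have h := hL t ht
      have h' : |1 + P t| + 2 * |Q t| ≤ L := (le_abs_self _).trans h
      rw [hlin t]
      generalize c * y t - d * x t = w at *
      generalize c * y1 t - d * x1 t = w' at *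
      generalize P t = p at *
      generalize Q t = q at *
      have a1 : 2 * w * w' * (1 + p) ≤ |1 + p| * (w ^ 2 + w' ^ 2) := by
        have := neg_abs_le (1 + p)
        have := le_abs_self (1 + p)
        nlinarith [sq_nonneg (w + w'), sq_nonneg (w - w'),
          mul_nonneg (sub_nonneg.2 (neg_abs_le (1 + p))) (sq_nonneg (w - w')),
          mul_nonneg (sub_nonneg.2 (neg_abs_le (1 + p))) (sq_nonneg (w + w')),
          mul_nonneg (sub_nonneg.2 (le_abs_self (1 + p))) (sq_nonneg (w - w')),
          mul_nonneg (sub_nonneg.2 (le_abs_self (1 + p))) (sq_nonneg (w + w'))]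
      have a2 : 2 * q * w' ^ 2 ≤ 2 * |q| * (w ^ 2 + w' ^ 2) := by
        nlinarith [mul_nonneg (sub_nonneg.2 (le_abs_self q)) (sq_nonneg w'),
          mul_nonneg (abs_nonneg q) (sq_nonneg w)]
      have a3 : (|1 + p| + 2 * |q|) * (w ^ 2 + w' ^ 2) ≤ L * (w ^ 2 + w' ^ 2) :=
        mul_le_mul_of_nonneg_right h' (by positivity)
      nlinarith)
  obtain ⟨s, hs, hs0⟩ := exists_hasDerivAt_eq_zero (f := x) (f' := x1)
    (by linarith : t1 < t1 + T) hcx.continuousOn (hperx t1).symm fun t _ => hdx t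
  have h := hE s ⟨hs.1.le, hs.2.le⟩
  simp only [hs0] at h
  have h1 := hu s
  rw [hs0] at h1
  have h2 : 0 < c ^ 2 := by positivity
  nlinarith [sq_nonneg (c * y s - d * x s)]

theorem aux_zeros (T : ℝ) (hT : 0 < T) (w : ℝ → ℝ) (hc : Continuous w)
    (hper : Function.Periodic w T) (a b : ℝ) (ha : a ∈ Set.Ico 0 T) (hb : b ∈ Set.Ico 0 T)
    (hab : a < b) (hs : w a * w b < 0) :
    ∃ t₁ ∈ Set.Ico 0 T, ∃ t₂ ∈ Set.Ico 0 T, t₁ ≠ t₂ ∧ w t₁ = 0 ∧ w t₂ = 0 := by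
  have ivt : ∀ p q, p < q → w p * w q < 0 → ∃ s, p < s ∧ s < q ∧ w s = 0 := by
    intro p q hpq h
    rcases mul_neg_iff.1 h with h | h
    · obtain ⟨s, hs, h0⟩ := intermediate_value_Ioo' hpq.le hc.continuousOn ⟨h.2, h.1⟩
      exact ⟨s, hs.1, hs.2, h0⟩
    · obtain ⟨s, hs, h0⟩ := intermediate_value_Ioo hpq.le hc.continuousOn ⟨h.1, h.2⟩
      exact ⟨s, hs.1, hs.2, h0⟩
  obtain ⟨s, hs1, hs2, hs0⟩ := ivt a b hab hs
  obtain ⟨r, hr1, hr2, hr0⟩ := ivt b (a + T) (by linarith [ha.1, hb.2])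
    (by rw [hper a, mul_comm]; exact hs)
  have ha1 := ha.1
  have hb2 := hb.2
  have hb1 := hb.1
  refine ⟨s, ⟨by linarith, by linarith⟩, ?_⟩
  by_cases h : r < T
  · exact ⟨r, ⟨by linarith, h⟩, by intro e; linarith, hs0, hr0⟩
  · push Not at h
    refine ⟨r - T, ⟨by linarith, by linarith⟩, by intro e; linarith, hs0, ?_⟩
    rw [hper.sub_eq]; exact hr0

/-- an embedded closed geodesic — a nonconstant `T`-periodic unit-speed
solution `γ = (x, y)` of the self-shrinker profile equation with `x, y > 0`, injective
on `[0, T)` — intersects the cone line `√(m−1)·y = √(n−1)·x` at least twice. -/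
theorem embedded_closed_geodesic_meets_cone_line_twice (m n : ℕ) (hm : 2 ≤ m)
    (hn : 2 ≤ n) (T : ℝ) (hT : 0 < T) (x y : ℝ → ℝ)
    (hperx : ∀ t, x (t + T) = x t) (hpery : ∀ t, y (t + T) = y t)
    (hsol : IsProfileSol m n x y Set.univ)
    (hinj : Set.InjOn (fun t => (x t, y t)) (Set.Ico 0 T)) :
    ∃ t₁ ∈ Set.Ico 0 T, ∃ t₂ ∈ Set.Ico 0 T, t₁ ≠ t₂ ∧
      Real.sqrt ((m : ℝ) - 1) * y t₁ = Real.sqrt ((n : ℝ) - 1) * x t₁ ∧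
      Real.sqrt ((m : ℝ) - 1) * y t₂ = Real.sqrt ((n : ℝ) - 1) * x t₂ := by
  have hswap : IsProfileSol n m y x Set.univ := by
    intro t ht
    obtain ⟨h1, h2, h3, h4, h5, h6, h7, h8⟩ := hsol t ht
    exact ⟨h2, h1, h5, h6, h3, h4, by linarith, by linear_combination -h8⟩
  obtain ⟨p, hp⟩ := aux_pos m n hm hn T hT x y hperx hpery hsol
  obtain ⟨q, hq⟩ := aux_pos n m hn hm T hT y x hpery hperx hswap
  have hcx : Continuous x :=
    continuous_iff_continuousAt.2 fun t => (hsol t trivial).2.2.1.continuousAt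
  have hcy : Continuous y :=
    continuous_iff_continuousAt.2 fun t => (hsol t trivial).2.2.2.2.1.continuousAt
  obtain ⟨w, hw⟩ : ∃ w : ℝ → ℝ, w = fun t =>
    Real.sqrt ((m : ℝ) - 1) * y t - Real.sqrt ((n : ℝ) - 1) * x t := ⟨_, rfl⟩
  have hwc : Continuous w := by
    rw [hw]; exact (hcy.const_mul _).sub (hcx.const_mul _)
  have hwp : Function.Periodic w T := by
    intro t; simp only [hw, hperx, hpery]
  obtain ⟨a, ha, hpa⟩ := hwp.exists_mem_Ico₀ hT p
  obtain ⟨b, hb, hqb⟩ := hwp.exists_mem_Ico₀ hT q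
  have hwa : 0 < w a := by rw [← hpa, hw]; exact hp
  have hwb : w b < 0 := by rw [← hqb, hw]; simp only; linarith
  have hz : ∃ t₁ ∈ Set.Ico 0 T, ∃ t₂ ∈ Set.Ico 0 T, t₁ ≠ t₂ ∧ w t₁ = 0 ∧ w t₂ = 0 := by
    rcases lt_trichotomy a b with h | h | h
    · exact aux_zeros T hT w hwc hwp a b ha hb h (mul_neg_of_pos_of_neg hwa hwb)
    · rw [h] at hwa; linarith
    · exact aux_zeros T hT w hwc hwp b a hb ha h (mul_neg_of_neg_of_pos hwb hwa)
  obtain ⟨t₁, h1, t₂, h2, hne, e1, e2⟩ := hz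
  rw [hw] at e1 e2
  exact ⟨t₁, h1, t₂, h2, hne, sub_eq_zero.1 e1, sub_eq_zero.1 e2⟩
end
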